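/- arXiv:2210.13045 — 4 statements merged into one kernel-verified Lean document; each statement's English description precedes it below -/
import Mathlib

section
/- Let Δ be a negative integer with Δ ≡ 0 or 1 (mod 4), let π ∈ {0,1} satisfy π ≡ Δ (mod 2), set μ := (Δ − π²)/4 ∈ ℤ, and let S_ω := ℤ[ω]/⟨ω² + πω − μ⟩ (an integral domain since Δ < 0). Let a, b, c ∈ ℤ with b² − 4ac = Δ, a ≠ 0, gcd(a, Δ) = 1 and b ≡ π (mod 2). If there exist x, y ∈ ℤ and a sign σ ∈ {1, −1} such that a ≡ σ·(x² + πxy − μy²) (mod Δ), then the class of the ideal ⟨a, ω + (π−b)/2⟩ in the class group of S_ω is a square. (This expresses that over ℤ with negative discriminant, the principal genus for the twisted action is exactly the subgroup of squares.) -/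
section
open MeasureTheory

lemma pg_minkowski (a b c r d δ R : ℤ) (ha : 0 < a) (hδ : 4 * a * c - b ^ 2 = δ) (hδ0 : 0 < δ)
    (hR : 0 < R) (h : δ * d ^ 2 = R ^ 3) :
    ∃ X Y T : ℤ, ¬ (X = 0 ∧ Y = 0 ∧ T = 0) ∧
      a * X ^ 2 + b * X * Y + c * Y ^ 2 + (r * X + d * T) ^ 2 < R := by
  have haR : (0 : ℝ) < a := by exact_mod_cast ha
  have hδR : (0 : ℝ) < δ := by exact_mod_cast hδ0
  have hRR : (0 : ℝ) < R := by exact_mod_cast hR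
  have hδ' : 4 * (a : ℝ) * c - b ^ 2 = δ := by exact_mod_cast hδ
  have h' : (δ : ℝ) * d ^ 2 = R ^ 3 := by exact_mod_cast h
  let A : Matrix (Fin 3) (Fin 3) ℝ :=
    !![√a, b / (2 * √a), 0; 0, √δ / (2 * √a), 0; r, 0, d]
  have hsa : √(a : ℝ) ≠ 0 := (Real.sqrt_pos.2 haR).ne'
  have hsa2 : √(a : ℝ) ^ 2 = a := Real.sq_sqrt haR.le
  have hsδ2 : √(δ : ℝ) ^ 2 = δ := Real.sq_sqrt hδR.le
  have hdet : A.det = √δ * d / 2 := by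
    simp [A, Matrix.det_fin_three]
    field_simp
  have hdet2 : A.det ^ 2 = R ^ 3 / 4 := by
    rw [hdet, ← h', div_pow, mul_pow, hsδ2]; norm_num
  have hdet3 : |A.det| = √R ^ 3 / 2 := by
    rw [← Real.sqrt_sq_eq_abs, hdet2]
    rw [show (R : ℝ) ^ 3 / 4 = (√R ^ 3 / 2) ^ 2 by
      rw [div_pow, ← pow_mul, mul_comm 3 2, pow_mul, Real.sq_sqrt hRR.le]; norm_num]
    exact Real.sqrt_sq (by positivity)
  have hsR : 0 < √(R : ℝ) := Real.sqrt_pos.2 hRR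
  have hdet0 : LinearMap.det (Matrix.toLin' A) ≠ 0 := by
    rw [LinearMap.det_toLin', ← abs_ne_zero, hdet3]
    positivity
  let B : Set (Fin 3 → ℝ) := (WithLp.toLp 2) ⁻¹' (Metric.ball (0 : EuclideanSpace ℝ (Fin 3)) √R)
  have hBvol : volume B = ENNReal.ofReal (√R ^ 3 * (Real.pi * 4 / 3)) := by
    have := (PiLp.volume_preserving_toLp (Fin 3)).measure_preimage
      (s := Metric.ball (0 : EuclideanSpace ℝ (Fin 3)) √R) Metric.isOpen_ball.measurableSet.nullMeasurableSet
    rw [EuclideanSpace.volume_ball_fin_three, ← ENNReal.ofReal_pow hsR.le,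
      ← ENNReal.ofReal_mul (by positivity)] at this
    exact this
  let s : Set (Fin 3 → ℝ) := (Matrix.toLin' A) ⁻¹' B
  have hsvol : volume s = ENNReal.ofReal (8 * (Real.pi / 3)) := by
    rw [Measure.addHaar_preimage_linearMap _ hdet0, hBvol, ← ENNReal.ofReal_mul (by positivity),
      LinearMap.det_toLin', abs_inv, hdet3]
    congr 1
    field_simp
    norm_num
  have hmem : ∀ x, x ∈ s ↔ ‖WithLp.toLp 2 (A.mulVec x)‖ < √R := by
    intro x
    simp [s, B]
  have hsymm : ∀ x ∈ s, -x ∈ s := by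
    intro x hx
    rw [hmem] at hx ⊢
    rw [Matrix.mulVec_neg, WithLp.toLp_neg, norm_neg]
    exact hx
  have hconv : Convex ℝ s := by
    have h1 : Convex ℝ B :=
      (convex_ball (0 : EuclideanSpace ℝ (Fin 3)) √R).linear_preimage
        ((WithLp.linearEquiv 2 ℝ (Fin 3 → ℝ)).symm.toLinearMap)
    exact h1.linear_preimage _
  have hfund := ZSpan.isAddFundamentalDomain' (Pi.basisFun ℝ (Fin 3)) (volume : Measure (Fin 3 → ℝ))
  have : Countable ((Submodule.span ℤ (Set.range (Pi.basisFun ℝ (Fin 3)))).toAddSubgroup) := by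
    change Countable (Submodule.span ℤ (Set.range (Pi.basisFun ℝ (Fin 3))))
    infer_instance
  obtain ⟨⟨x, hxL⟩, hx0, hxs⟩ := exists_ne_zero_mem_lattice_of_measure_mul_two_pow_lt_measure
    hfund hsymm hconv (by
      rw [hsvol, ZSpan.volume_fundamentalDomain]
      have : (Matrix.of (Pi.basisFun ℝ (Fin 3))) = 1 := by
        ext i j; simp [Matrix.one_apply, Pi.single_apply, eq_comm]
      rw [this]
      simp only [Matrix.det_one, abs_one, ENNReal.ofReal_one, one_mul, Module.finrank_fin_fun]
      rw [show (2 : ENNReal) ^ 3 = ENNReal.ofReal 8 by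
        rw [show (8 : ℝ) = 2 ^ 3 by norm_num, ENNReal.ofReal_pow (by norm_num)]; simp]
      rw [ENNReal.ofReal_lt_ofReal_iff (by positivity)]
      linarith [Real.pi_gt_three])
  have hint : ∀ i, ∃ n : ℤ, (n : ℝ) = x i := by
    intro i
    have := ((Pi.basisFun ℝ (Fin 3)).mem_span_iff_repr_mem ℤ x).1 hxL i
    simpa using this
  choose n hn using hint
  refine ⟨n 0, n 1, n 2, ?_, ?_⟩
  · rintro ⟨h0, h1, h2⟩
    apply hx0
    ext i
    fin_cases i <;> simp [← hn, h0, h1, h2]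
  · have hlt := (hmem x).1 hxs
    rw [EuclideanSpace.norm_eq, Real.sqrt_lt_sqrt_iff (by positivity), Fin.sum_univ_three] at hlt
    simp [A, Matrix.mulVec, dotProduct, Fin.sum_univ_three, ← hn] at hlt
    have e : (√(a : ℝ) * n 0 + b / (2 * √a) * n 1) ^ 2 + (√δ / (2 * √a) * n 1) ^ 2 =
        a * n 0 ^ 2 + b * n 0 * n 1 + c * n 1 ^ 2 := by
      have e1 : (√δ / (2 * √(a : ℝ)) * n 1) ^ 2 = (4 * a * c - b ^ 2) / (4 * a) * n 1 ^ 2 := by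
        rw [mul_pow, div_pow, mul_pow, hsδ2, hsa2, hδ']; norm_num
      have e2 : (√(a : ℝ) * n 0 + b / (2 * √a) * n 1) ^ 2 =
          a * n 0 ^ 2 + b * n 0 * n 1 + b ^ 2 / (4 * a) * n 1 ^ 2 := by
        have : b / (2 * √(a : ℝ)) = b * √a / (2 * a) := by
          rw [div_eq_div_iff (by positivity) (by positivity)]
          linear_combination (-2 * (b : ℝ)) * hsa2
        rw [this]
        field_simp
        linear_combination 4 * (a * n 0 * 2 + b * n 1) ^ 2 * hsa2
      rw [e1, e2]
      field_simp
      ring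
    rw [abs_of_nonneg (Real.sqrt_nonneg _), abs_of_nonneg (Real.sqrt_nonneg _),
      mul_pow _ |_|, sq_abs, ← mul_pow, e] at hlt
    exact_mod_cast hlt

end

lemma pg_local_val (q0 q1 q2 q3 q4 p : ℤ)
    (hq : ¬ (p ∣ q0 ∧ p ∣ q1 ∧ p ∣ q2 ∧ p ∣ q3 ∧ p ∣ q4)) :
    ∃ x y t : ℤ, ¬ p ∣ q0 * x ^ 2 + q1 * y ^ 2 + q2 * t ^ 2 + q3 * x * y + q4 * x * t := by
  by_contra! h
  have h0 : p ∣ q0 := by simpa using h 1 0 0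
  have h1 : p ∣ q1 := by simpa using h 0 1 0
  have h2 : p ∣ q2 := by simpa using h 0 0 1
  have h3 : p ∣ q3 := by
    have := dvd_sub (dvd_sub (h 1 1 0) h0) h1
    ring_nf at this; exact this
  have h4 : p ∣ q4 := by
    have := dvd_sub (dvd_sub (h 1 0 1) h0) h2
    ring_nf at this; exact this
  exact hq ⟨h0, h1, h2, h3, h4⟩

lemma pg_finset_val (q0 q1 q2 q3 q4 : ℤ)
    (hq : ∀ p : ℕ, p.Prime → ¬ ((p : ℤ) ∣ q0 ∧ (p : ℤ) ∣ q1 ∧ (p : ℤ) ∣ q2 ∧ (p : ℤ) ∣ q3 ∧ (p : ℤ) ∣ q4))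
    (s : Finset ℕ) : (∀ p ∈ s, p.Prime) →
    ∃ x y t : ℤ, ∀ p ∈ s,
      ¬ (p : ℤ) ∣ q0 * x ^ 2 + q1 * y ^ 2 + q2 * t ^ 2 + q3 * x * y + q4 * x * t := by
  induction s using Finset.induction_on with
  | empty => intro _; exact ⟨0, 0, 0, by simp⟩
  | insert p s hp ih =>
    intro hs
    obtain ⟨x, y, t, h⟩ := ih (fun p' hp' => hs p' (Finset.mem_insert_of_mem hp'))
    have hpp : p.Prime := hs p (Finset.mem_insert_self _ _)
    obtain ⟨x', y', t', h'⟩ := pg_local_val q0 q1 q2 q3 q4 p (hq p hpp)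
    have hcop : IsCoprime (p : ℤ) (∏ l ∈ s, (l : ℤ)) := by
      apply IsCoprime.prod_right
      intro l hl
      rw [Nat.isCoprime_iff_coprime, Nat.coprime_primes hpp (hs l (Finset.mem_insert_of_mem hl))]
      rintro rfl
      exact hp hl
    obtain ⟨u, v, huv⟩ := hcop
    set P := ∏ l ∈ s, (l : ℤ) with hP
    have key : ∀ (m A B D A' B' D' : ℤ), m ∣ A' - A → m ∣ B' - B → m ∣ D' - D →
        m ∣ q0 * A' ^ 2 + q1 * B' ^ 2 + q2 * D' ^ 2 + q3 * A' * B' + q4 * A' * D' →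
        m ∣ q0 * A ^ 2 + q1 * B ^ 2 + q2 * D ^ 2 + q3 * A * B + q4 * A * D := by
      rintro m A B D A' B' D' ⟨i, hi⟩ ⟨j, hj⟩ ⟨k, hk⟩ ⟨w, hw⟩
      obtain rfl : A' = A + m * i := by linarith
      obtain rfl : B' = B + m * j := by linarith
      obtain rfl : D' = D + m * k := by linarith
      refine ⟨w - (q0 * (2 * A * i + m * i ^ 2) + q1 * (2 * B * j + m * j ^ 2) +
        q2 * (2 * D * k + m * k ^ 2) + q3 * (A * j + B * i + m * i * j) +
        q4 * (A * k + D * i + m * i * k)), ?_⟩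
      linear_combination hw
    refine ⟨x + v * P * (x' - x), y + v * P * (y' - y), t + v * P * (t' - t), ?_⟩
    intro l hl hdvd
    rcases Finset.mem_insert.1 hl with rfl | hl
    · refine h' (key l x' y' t' _ _ _ ?_ ?_ ?_ hdvd)
      · exact ⟨-u * (x' - x), by linear_combination (x' - x) * huv⟩
      · exact ⟨-u * (y' - y), by linear_combination (y' - y) * huv⟩
      · exact ⟨-u * (t' - t), by linear_combination (t' - t) * huv⟩
    · have hlP : (l : ℤ) ∣ P := Finset.dvd_prod_of_mem (fun l : ℕ => (l : ℤ)) hl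
      obtain ⟨w, hw⟩ := hlP
      refine h l hl (key l x y t _ _ _ ?_ ?_ ?_ hdvd)
      · exact ⟨v * w * (x' - x), by rw [hw]; ring⟩
      · exact ⟨v * w * (y' - y), by rw [hw]; ring⟩
      · exact ⟨v * w * (t' - t), by rw [hw]; ring⟩

lemma pg_coprime_val (q0 q1 q2 q3 q4 N : ℤ) (hN : N ≠ 0)
    (hq : ∀ p : ℕ, p.Prime → ¬ ((p : ℤ) ∣ q0 ∧ (p : ℤ) ∣ q1 ∧ (p : ℤ) ∣ q2 ∧ (p : ℤ) ∣ q3 ∧ (p : ℤ) ∣ q4)) :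
    ∃ x y t : ℤ, IsCoprime (q0 * x ^ 2 + q1 * y ^ 2 + q2 * t ^ 2 + q3 * x * y + q4 * x * t) N := by
  obtain ⟨x, y, t, h⟩ := pg_finset_val q0 q1 q2 q3 q4 hq N.natAbs.primeFactors
    (fun p hp => Nat.prime_of_mem_primeFactors hp)
  refine ⟨x, y, t, ?_⟩
  rw [Int.isCoprime_iff_gcd_eq_one]
  by_contra hg
  obtain ⟨p, hp, hpd⟩ := Nat.exists_prime_and_dvd hg
  have h1 : (p : ℤ) ∣ _ := (Int.natCast_dvd_natCast.2 hpd).trans (Int.gcd_dvd_left _ _)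
  have h2 : (p : ℤ) ∣ N := (Int.natCast_dvd_natCast.2 hpd).trans (Int.gcd_dvd_right _ _)
  exact h p (Nat.mem_primeFactors.2 ⟨hp, Int.natCast_dvd.1 h2, by simpa using hN⟩) h1

lemma pg_iso_local (k c β ρ ν X Y T : ℤ) (hH : c * (4 * k * ν + ρ ^ 2) = ν * β ^ 2 - 1)
    (hG : k * X ^ 2 + c * Y ^ 2 + β * X * Y - ρ * X * T - ν * T ^ 2 = 0)
    (p : ℕ) (hp : p.Prime) (hprim : ¬ ((p : ℤ) ∣ X ∧ (p : ℤ) ∣ Y ∧ (p : ℤ) ∣ T)) :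
    ¬ ((p : ℤ) ∣ (-k * X - β * Y + ρ * T) ∧ (p : ℤ) ∣ c * X ∧ (p : ℤ) ∣ -ν * X ∧
      (p : ℤ) ∣ -2 * c * Y ∧ (p : ℤ) ∣ 2 * ν * T) := by
  have : Fact p.Prime := ⟨hp⟩
  rintro ⟨h0, h1, h2, h3, h4⟩
  apply hprim
  simp only [← ZMod.intCast_zmod_eq_zero_iff_dvd] at *
  have hH' := congrArg (Int.cast : ℤ → ZMod p) hH
  have hG' := congrArg (Int.cast : ℤ → ZMod p) hG
  push_cast at *
  have hX : (X : ZMod p) = 0 := by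
    linear_combination -((-(X : ZMod p)) * hH' + (4 * k * ν + ρ ^ 2) * h1 + β ^ 2 * h2)
  rw [hX] at h0 hG'
  have e1 : (c : ZMod p) * Y ^ 2 = ν * T ^ 2 := by linear_combination hG'
  have e2 : (ρ : ZMod p) * T = β * Y := by linear_combination h0
  refine ⟨hX, ?_, ?_⟩
  · have : (Y : ZMod p) ^ 2 = 0 := by
      linear_combination -((-(Y : ZMod p) ^ 2) * hH' - 2 * k * ν * Y * h3 + ρ ^ 2 * e1
        + ν * (ρ * T + β * Y) * e2)
    exact pow_eq_zero_iff (two_ne_zero) |>.1 this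
  · have : (T : ZMod p) ^ 2 = 0 := by
      linear_combination -((-(T : ZMod p) ^ 2) * hH' + 2 * k * c * T * h4 + β ^ 2 * e1
        + c * (ρ * T + β * Y) * e2)
    exact pow_eq_zero_iff (two_ne_zero) |>.1 this

lemma pg_iso (k c β ρ ν X Y T N : ℤ) (hN : N ≠ 0) (hH : c * (4 * k * ν + ρ ^ 2) = ν * β ^ 2 - 1)
    (hG : k * X ^ 2 + c * Y ^ 2 + β * X * Y - ρ * X * T - ν * T ^ 2 = 0)
    (h0 : ¬ (X = 0 ∧ Y = 0 ∧ T = 0)) :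
    ∃ X Y T : ℤ, k * X ^ 2 + c * Y ^ 2 + β * X * Y - ρ * X * T - ν * T ^ 2 = 0 ∧
      IsCoprime X N := by
  -- make the vector primitive
  obtain ⟨X, Y, T, hG, hprim⟩ : ∃ X Y T : ℤ,
      k * X ^ 2 + c * Y ^ 2 + β * X * Y - ρ * X * T - ν * T ^ 2 = 0 ∧
      ∀ p : ℕ, p.Prime → ¬ ((p : ℤ) ∣ X ∧ (p : ℤ) ∣ Y ∧ (p : ℤ) ∣ T) := by
    set g : ℕ := Nat.gcd X.natAbs (Nat.gcd Y.natAbs T.natAbs) with hg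
    have hg0 : g ≠ 0 := by
      intro h
      rw [hg, Nat.gcd_eq_zero_iff, Nat.gcd_eq_zero_iff] at h
      simp at h
      exact h0 h
    have hgX : (g : ℤ) ∣ X := Int.natCast_dvd.2 (Nat.gcd_dvd_left _ _)
    have hgY : (g : ℤ) ∣ Y := Int.natCast_dvd.2 ((Nat.gcd_dvd_right _ _).trans (Nat.gcd_dvd_left _ _))
    have hgT : (g : ℤ) ∣ T := Int.natCast_dvd.2 ((Nat.gcd_dvd_right _ _).trans (Nat.gcd_dvd_right _ _))
    obtain ⟨X', hX⟩ := hgX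
    obtain ⟨Y', hY⟩ := hgY
    obtain ⟨T', hT⟩ := hgT
    have hgz : (g : ℤ) ≠ 0 := by exact_mod_cast hg0
    refine ⟨X', Y', T', ?_, ?_⟩
    · have : (g : ℤ) ^ 2 * (k * X' ^ 2 + c * Y' ^ 2 + β * X' * Y' - ρ * X' * T' - ν * T' ^ 2) = 0 := by
        rw [hX, hY, hT] at hG
        linear_combination hG
      exact (mul_eq_zero.1 this).resolve_left (pow_ne_zero 2 hgz)
    · rintro p hp ⟨h1, h2, h3⟩
      have d1 : g * p ∣ X.natAbs := Int.natCast_dvd.1 (by rw [hX]; push_cast; exact mul_dvd_mul_left _ h1)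
      have d2 : g * p ∣ Y.natAbs := Int.natCast_dvd.1 (by rw [hY]; push_cast; exact mul_dvd_mul_left _ h2)
      have d3 : g * p ∣ T.natAbs := Int.natCast_dvd.1 (by rw [hT]; push_cast; exact mul_dvd_mul_left _ h3)
      have d4 : g * p ∣ g := Nat.dvd_gcd d1 (Nat.dvd_gcd d2 d3)
      have := Nat.le_of_dvd (Nat.pos_of_ne_zero hg0) d4
      have := hp.two_le
      have := Nat.pos_of_ne_zero hg0
      nlinarith
  obtain ⟨x, y, t, hco⟩ := pg_coprime_val (-k * X - β * Y + ρ * T) (c * X) (-ν * X) (-2 * c * Y)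
    (2 * ν * T) N hN (fun p hp => pg_iso_local k c β ρ ν X Y T hH hG p hp (hprim p hp))
  set Gv := k * x ^ 2 + c * y ^ 2 + β * x * y - ρ * x * t - ν * t ^ 2 with hGv
  set Bv := 2 * k * X * x + 2 * c * Y * y + β * (X * y + Y * x) - ρ * (X * t + T * x) - 2 * ν * T * t
    with hBv
  refine ⟨Gv * X - Bv * x, Gv * Y - Bv * y, Gv * T - Bv * t, ?_, ?_⟩
  · have : k * (Gv * X - Bv * x) ^ 2 + c * (Gv * Y - Bv * y) ^ 2 +
        β * (Gv * X - Bv * x) * (Gv * Y - Bv * y) - ρ * (Gv * X - Bv * x) * (Gv * T - Bv * t) -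
        ν * (Gv * T - Bv * t) ^ 2 =
        Gv ^ 2 * (k * X ^ 2 + c * Y ^ 2 + β * X * Y - ρ * X * T - ν * T ^ 2) -
        Gv * Bv * (2 * k * X * x + 2 * c * Y * y + β * (X * y + Y * x) - ρ * (X * t + T * x)
          - 2 * ν * T * t) +
        Bv ^ 2 * (k * x ^ 2 + c * y ^ 2 + β * x * y - ρ * x * t - ν * t ^ 2) := by ring
    rw [this, hG, ← hBv, ← hGv]; ring
  · convert hco using 1
    rw [hGv, hBv]; ring

lemma pg_inner (a k β c r d ρ ν Δ ε : ℤ) (ha : 0 < a) (hΔ : Δ < 0) (hε : ε = 1 ∨ ε = -1)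
    (hak : a = ε * r ^ 2 + Δ * k) (hρ : 2 * r * d = Δ * ρ) (hd : d ^ 2 = Δ * ν)
    (hν : ν * (4 * a * c - Δ * β ^ 2) = -Δ)
    (hH : ε = 1 → c * (4 * k * ν + ρ ^ 2) = ν * β ^ 2 - 1) :
    ∃ X Y T : ℤ, a * X ^ 2 + Δ * β * X * Y + Δ * c * Y ^ 2 = (r * X + d * T) ^ 2 ∧
      IsCoprime X Δ := by
  have hν0 : ν ≠ 0 := by rintro rfl; simp at hν; omega
  have hd0 : d ≠ 0 := by
    rintro rfl
    have : Δ * ν = 0 := by rw [← hd]; ring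
    rcases mul_eq_zero.1 this with h | h
    · omega
    · exact hν0 h
  have hνneg : ν < 0 := by
    have : 0 < d ^ 2 := by positivity
    by_contra hh
    push Not at hh
    nlinarith
  have hneg : 4 * a * c - Δ * β ^ 2 < 0 := by
    by_contra hh
    push Not at hh
    nlinarith
  have hδ0 : 0 < Δ * (4 * a * c - Δ * β ^ 2) := mul_pos_of_neg_of_neg hΔ hneg
  set δ := Δ * (4 * a * c - Δ * β ^ 2) with hδ
  obtain ⟨X, Y, T, hnz, hlt⟩ := pg_minkowski a (Δ * β) (Δ * c) r d δ (-Δ) ha (by rw [hδ]; ring) hδ0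
    (by omega) (by rw [hδ, hd]; linear_combination Δ ^ 2 * hν)
  have hfid : 4 * a * (a * X ^ 2 + Δ * β * X * Y + Δ * c * Y ^ 2) =
      (2 * a * X + Δ * β * Y) ^ 2 + δ * Y ^ 2 := by rw [hδ]; ring
  have hf0 : 0 ≤ a * X ^ 2 + Δ * β * X * Y + Δ * c * Y ^ 2 := by
    have : 0 ≤ 4 * a * (a * X ^ 2 + Δ * β * X * Y + Δ * c * Y ^ 2) := by rw [hfid]; positivity
    by_contra hh
    push Not at hh
    nlinarith
  have hZ0 : 0 ≤ (r * X + d * T) ^ 2 := sq_nonneg _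
  rcases hε with rfl | rfl
  · have hdiff : a * X ^ 2 + Δ * β * X * Y + Δ * c * Y ^ 2 - (r * X + d * T) ^ 2 =
        Δ * (k * X ^ 2 + c * Y ^ 2 + β * X * Y - ρ * X * T - ν * T ^ 2) := by
      linear_combination X ^ 2 * hak - X * T * hρ - T ^ 2 * hd
    have hz : a * X ^ 2 + Δ * β * X * Y + Δ * c * Y ^ 2 - (r * X + d * T) ^ 2 = 0 := by
      apply Int.eq_zero_of_abs_lt_dvd (m := -Δ)
      · exact neg_dvd.2 ⟨_, hdiff⟩
      · rw [abs_lt]; constructor <;> linarith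
    rw [hz] at hdiff
    have hG := (mul_eq_zero.1 hdiff.symm).resolve_left hΔ.ne
    obtain ⟨X', Y', T', hG', hco⟩ := pg_iso k c β ρ ν X Y T Δ hΔ.ne (hH rfl) hG hnz
    refine ⟨X', Y', T', ?_, hco⟩
    linear_combination X' ^ 2 * hak - X' * T' * hρ - T' ^ 2 * hd + Δ * hG'
  · exfalso
    have hdiff : a * X ^ 2 + Δ * β * X * Y + Δ * c * Y ^ 2 + (r * X + d * T) ^ 2 =
        Δ * (k * X ^ 2 + c * Y ^ 2 + β * X * Y + ρ * X * T + ν * T ^ 2) := by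
      linear_combination X ^ 2 * hak + X * T * hρ + T ^ 2 * hd
    have hz : a * X ^ 2 + Δ * β * X * Y + Δ * c * Y ^ 2 + (r * X + d * T) ^ 2 = 0 := by
      apply Int.eq_zero_of_abs_lt_dvd (m := -Δ)
      · exact neg_dvd.2 ⟨_, hdiff⟩
      · rw [abs_lt]; constructor <;> linarith
    have hf : a * X ^ 2 + Δ * β * X * Y + Δ * c * Y ^ 2 = 0 := by linarith
    have hZ : (r * X + d * T) ^ 2 = 0 := by linarith
    rw [hf, mul_zero] at hfid
    have hY : Y = 0 := by
      have : δ * Y ^ 2 = 0 := by nlinarith [sq_nonneg (2 * a * X + Δ * β * Y), sq_nonneg Y]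
      simpa [hδ0.ne'] using this
    have hX : X = 0 := by
      rw [hY] at hf
      have : a * X ^ 2 = 0 := by linarith
      simpa [ha.ne'] using this
    have hT : T = 0 := by
      rw [hX] at hZ
      simpa [hd0] using hZ
    exact hnz ⟨hX, hY, hT⟩

lemma pg_coprime_z (X T r d Δ ν : ℤ) (hX : IsCoprime X Δ) (hr : IsCoprime r Δ) (hdΔ : d ∣ Δ)
    (hd : d ^ 2 = Δ * ν) : IsCoprime (r * X + d * T) Δ := by
  have h1 : IsCoprime (r * X) d := (hr.mul_left hX).of_isCoprime_of_dvd_right hdΔ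
  have h2 : IsCoprime (r * X + d * T) d := h1.add_mul_left_left T
  have h3 : IsCoprime (r * X + d * T) (d ^ 2) := h2.pow_right
  exact h3.of_isCoprime_of_dvd_right ⟨ν, hd⟩

lemma pg_normal (a b c Δ r ε : ℤ) (ha : 0 < a) (hΔ : Δ < 0) (hε : ε = 1 ∨ ε = -1)
    (hdisc : b ^ 2 - 4 * a * c = Δ) (hco : IsCoprime a Δ) (hr : Δ ∣ a - ε * r ^ 2) :
    ∃ X Y Z : ℤ, a * X ^ 2 + b * X * Y + c * Y ^ 2 = Z ^ 2 ∧ IsCoprime Z Δ := by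
  obtain ⟨k, hk⟩ := hr
  have hak : a = ε * r ^ 2 + Δ * k := by linarith
  have hrco : IsCoprime r Δ := by
    have h1 : IsCoprime (r * (ε * r)) Δ := by
      have h2 : IsCoprime (r * (ε * r) + Δ * k) Δ := by
        rw [show r * (ε * r) + Δ * k = a by rw [hak]; ring]; exact hco
      exact IsCoprime.of_add_mul_left_left h2
    exact h1.of_mul_left_left
  rcases Int.even_or_odd' b with ⟨b', hb | hb⟩
  · -- even discriminant
    set μ := b' ^ 2 - a * c with hμ
    have hΔμ : Δ = 4 * μ := by rw [← hdisc, hb, hμ]; ring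
    have hμ0 : μ ≠ 0 := by intro h; rw [h] at hΔμ; omega
    obtain ⟨u, v, huv⟩ := hco
    set t := -b' * u with ht
    set β := 4 * b' * v with hβ
    have hb1 : b' + a * t = μ * β := by
      rw [ht, hβ]; rw [hΔμ] at huv; linear_combination (-b') * huv
    have hc1 : a * (c + b * t + a * t ^ 2) = μ * (μ * β ^ 2 - 1) := by
      have : a * (c + b * t + a * t ^ 2) = (b' + a * t) ^ 2 - μ := by rw [hμ, hb]; ring
      rw [this, hb1]; ring
    have hμa : IsCoprime μ a := ⟨4 * v, u, by rw [hΔμ] at huv; linear_combination huv⟩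
    obtain ⟨c', hc'⟩ : μ ∣ c + b * t + a * t ^ 2 := hμa.dvd_of_dvd_mul_left ⟨_, hc1⟩
    have hac : a * c' = μ * β ^ 2 - 1 := by
      rw [hc'] at hc1
      exact mul_left_cancel₀ hμ0 (by linear_combination hc1)
    obtain ⟨X, Y, T, hf, hXco⟩ := pg_inner a k β c' r (2 * μ) r μ Δ ε ha hΔ hε hak
      (by rw [hΔμ]; ring) (by rw [hΔμ]; ring) (by rw [hΔμ]; linear_combination 4 * μ * hac)
      (by
        rintro rfl
        linear_combination hac - c' * hak - c' * k * hΔμ)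
    refine ⟨X + 2 * t * Y, 2 * Y, r * X + 2 * μ * T, ?_,
      pg_coprime_z X T r (2 * μ) Δ μ hXco hrco ⟨2, by rw [hΔμ]; ring⟩ (by rw [hΔμ]; ring)⟩
    rw [← hf, hΔμ]
    linear_combination 4 * Y ^ 2 * hc' + 4 * X * Y * hb1 + 2 * X * Y * hb
  · have hodd : IsCoprime (2 : ℤ) Δ := by
      refine ⟨-(2 * b' ^ 2 + 2 * b' - 2 * a * c), 1, ?_⟩
      rw [← hdisc, hb]; ring
    have hΔ0 : Δ ≠ 0 := hΔ.ne
    have h2a : IsCoprime (2 * a) Δ := hodd.mul_left hco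
    have h4a : IsCoprime Δ (4 * a) := by
      have := hodd.mul_left h2a
      rw [show (2 : ℤ) * (2 * a) = 4 * a by ring] at this
      exact this.symm
    obtain ⟨u, v, huv⟩ := h2a
    set t := -b * u with ht
    set β := b * v with hβ
    have hb1 : b + 2 * a * t = Δ * β := by
      rw [ht, hβ]; linear_combination (-b) * huv
    have hc1 : 4 * a * (c + b * t + a * t ^ 2) = Δ * (Δ * β ^ 2 - 1) := by
      have : 4 * a * (c + b * t + a * t ^ 2) = (b + 2 * a * t) ^ 2 - Δ := by rw [← hdisc]; ring
      rw [this, hb1]; ring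
    obtain ⟨c', hc'⟩ : Δ ∣ c + b * t + a * t ^ 2 := h4a.dvd_of_dvd_mul_left ⟨_, hc1⟩
    have hac : 4 * a * c' = Δ * β ^ 2 - 1 := by
      rw [hc'] at hc1
      exact mul_left_cancel₀ hΔ0 (by linear_combination hc1)
    obtain ⟨X, Y, T, hf, hXco⟩ := pg_inner a k β c' r Δ (2 * r) Δ Δ ε ha hΔ hε hak
      (by ring) (by ring) (by linear_combination Δ * hac)
      (by
        rintro rfl
        linear_combination hac - 4 * c' * hak)
    refine ⟨X + t * Y, Y, r * X + Δ * T, ?_,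
      pg_coprime_z X T r Δ Δ Δ hXco hrco dvd_rfl (by ring)⟩
    rw [← hf]
    linear_combination Y ^ 2 * hc' + X * Y * hb1

/-- A nonzero vector is a multiple of a primitive one. -/
lemma pg_primitive (X Y : ℤ) (h : ¬ (X = 0 ∧ Y = 0)) :
    ∃ g X' Y' : ℤ, g ≠ 0 ∧ X = g * X' ∧ Y = g * Y' ∧ IsCoprime X' Y' := by
  have hg : 0 < Int.gcd X Y := Int.gcd_pos_iff.2 (by tauto)
  obtain ⟨X', Y', hco, hX, hY⟩ := Int.exists_gcd_one hg
  exact ⟨Int.gcd X Y, X', Y', by exact_mod_cast hg.ne', by rw [mul_comm]; exact hX,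
    by rw [mul_comm]; exact hY, Int.isCoprime_iff_gcd_eq_one.2 hco⟩

lemma pg_pos (Δ π μ a b c e x y ε : ℤ) (hneg : Δ < 0) (hΔ : Δ = π ^ 2 + 4 * μ)
    (hdisc : b ^ 2 - 4 * a * c = Δ) (ha : 0 < a) (hco : IsCoprime a Δ) (he : π - b = 2 * e)
    (hΔ1 : Δ ≠ -1)
    (hε : ε = 1 ∨ ε = -1) (hval : Δ ∣ a - ε * (x ^ 2 + π * x * y - μ * y ^ 2)) :
    ∃ X Y Z : ℤ, a * X ^ 2 + b * X * Y + c * Y ^ 2 = Z ^ 2 ∧ IsCoprime Z Δ ∧ IsCoprime X Y ∧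
      Z ≠ 0 := by
  have hεε : ε * ε = 1 := by rcases hε with rfl | rfl <;> norm_num
  have hunit : ¬ IsUnit Δ := by
    rw [Int.isUnit_iff]; omega
  -- step 1: `f` represents `ε` modulo `Δ`
  obtain ⟨X, Y, hXY⟩ : ∃ X Y : ℤ, Δ ∣ a * X ^ 2 + b * X * Y + c * Y ^ 2 - ε := by
    obtain ⟨w, hw⟩ := hval
    have hco' := hco
    obtain ⟨u, v, huv⟩ := hco
    have hac : a * c = e ^ 2 - π * e - μ := by
      have : b = π - 2 * e := by linarith
      rw [this] at hdisc
      have : 4 * (a * c) = 4 * (e ^ 2 - π * e - μ) := by linear_combination -hdisc - hΔ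
      linarith
    have hb : b = π - 2 * e := by linarith
    refine ⟨u * (x + e * y), y, ?_⟩
    apply hco'.symm.dvd_of_dvd_mul_left
    have hX : a * (u * (x + e * y)) = x + e * y - Δ * (v * (x + e * y)) := by
      linear_combination (x + e * y) * huv
    set X := u * (x + e * y) with hXdef
    set z := v * (x + e * y) with hz
    have id1 : a * (a * X ^ 2 + b * X * y + c * y ^ 2 - ε) =
        (a * X - e * y) ^ 2 + π * (a * X - e * y) * y - μ * y ^ 2 - ε * a := by
      rw [hb]; linear_combination y ^ 2 * hac
    rw [id1, hX]
    refine ⟨-2 * x * z + Δ * z ^ 2 - π * z * y - ε * w, ?_⟩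
    linear_combination (-ε) * hw - (x ^ 2 + π * x * y - μ * y ^ 2) * hεε
  have hXY0 : ¬ (X = 0 ∧ Y = 0) := by
    rintro ⟨rfl, rfl⟩
    apply hunit
    have : Δ ∣ ε := by simpa using hXY
    exact isUnit_of_dvd_unit this (IsUnit.of_mul_eq_one ε hεε)
  obtain ⟨g, X', Y', hg, rfl, rfl, s, t, hst⟩ := pg_primitive X Y hXY0
  -- step 2: change basis
  set a' := a * X' ^ 2 + b * X' * Y' + c * Y' ^ 2 with ha'
  set b' := 2 * a * X' * (-t) + b * (X' * s - Y' * t) + 2 * c * Y' * s with hb'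
  set c' := a * t ^ 2 - b * t * s + c * s ^ 2 with hc'
  have hd' : b' ^ 2 - 4 * a' * c' = Δ := by
    rw [← hdisc, ha', hb', hc']
    linear_combination (b ^ 2 - 4 * a * c) * (s * X' + t * Y' + 1) * hst
  obtain ⟨w, hw⟩ := hXY
  have hw' : a' * g ^ 2 - ε = Δ * w := by rw [ha', ← hw]; ring
  have hgco : IsCoprime (a' * g ^ 2) Δ :=
    ⟨ε, -ε * w, by linear_combination ε * hw' + hεε⟩
  have ha'co : IsCoprime a' Δ := hgco.of_mul_left_left
  have hgc : IsCoprime g Δ := by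
    have := hgco.of_mul_left_right
    rw [pow_two] at this
    exact this.of_mul_left_left
  have ha'0 : a' ≠ 0 := by
    intro h
    rw [h] at ha'co
    exact hunit (isCoprime_zero_left.1 ha'co)
  have ha'pos : 0 < a' := by
    have h4 : 4 * a * a' = (2 * a * X' + b * Y') ^ 2 + (-Δ) * Y' ^ 2 := by rw [← hdisc, ha']; ring
    have : 0 ≤ 4 * a * a' := by
      rw [h4]
      have : 0 ≤ -Δ := by omega
      positivity
    have : 0 ≤ a' := by
      by_contra hh
      push Not at hh
      nlinarith
    omega
  obtain ⟨i, j, hij⟩ := hgc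
  have hr : Δ ∣ a' - ε * i ^ 2 := by
    refine ⟨i ^ 2 * w + a' * j * (1 + i * g), ?_⟩
    linear_combination i ^ 2 * hw' - a' * (1 + i * g) * hij
  obtain ⟨P, Q, Z, hf, hZ⟩ := pg_normal a' b' c' Δ i ε ha'pos hneg hε hd' ha'co hr
  have hf' : a * (X' * P - t * Q) ^ 2 + b * (X' * P - t * Q) * (Y' * P + s * Q) +
      c * (Y' * P + s * Q) ^ 2 = Z ^ 2 := by
    rw [← hf, ha', hb', hc']; ring
  set U := X' * P - t * Q
  set V := Y' * P + s * Q
  have hZ0 : Z ≠ 0 := by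
    rintro rfl
    exact hunit (isCoprime_zero_left.1 hZ)
  have hUV : ¬ (U = 0 ∧ V = 0) := by
    rintro ⟨h1, h2⟩
    rw [h1, h2] at hf'
    apply hZ0
    have : Z ^ 2 = 0 := by rw [← hf']; ring
    exact pow_eq_zero_iff two_ne_zero |>.1 this
  obtain ⟨G, U', V', hG, hU, hV, hco'⟩ := pg_primitive U V hUV
  have hGZ : G ∣ Z := by
    rw [← Int.pow_dvd_pow_iff (n := 2) (by norm_num)]
    refine ⟨a * U' ^ 2 + b * U' * V' + c * V' ^ 2, ?_⟩
    rw [← hf', hU, hV]; ring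
  obtain ⟨Z', rfl⟩ := hGZ
  refine ⟨U', V', Z', ?_, hZ.of_mul_left_right, hco', right_ne_zero_of_mul hZ0⟩
  rw [hU, hV] at hf'
  exact mul_left_cancel₀ (pow_ne_zero 2 hG) (by linear_combination hf')

open Polynomial FractionalIdeal

open scoped nonZeroDivisors


lemma pg_singleton_mul_pair {S : Type*} [CommRing S] (x y z : S) :
    Ideal.span {x} * Ideal.span {y, z} = Ideal.span {x * y, x * z} := by
  rw [Ideal.span_mul_span', Set.singleton_mul, Set.image_pair]

lemma pg_ideal_eq {S : Type*} [CommRing S] (θ : S) (a b c X Y Z s t : ℤ)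
    (hθ : θ ^ 2 + b * θ + a * c = 0)
    (hf : a * X ^ 2 + b * X * Y + c * Y ^ 2 = Z ^ 2) (hst : X * s + Y * t = 1) :
    Ideal.span {((Z : S)) ^ 2} * Ideal.span {(a : S), θ} =
      Ideal.span {(a : S) * X - Y * θ} *
        Ideal.span {(Z : S) ^ 2, θ + ((a * X * t + b * Y * t - c * Y * s : ℤ) : S)} := by
  have hf' : (a : S) * X ^ 2 + b * X * Y + c * Y ^ 2 = Z ^ 2 := by
    exact_mod_cast congrArg (Int.cast : ℤ → S) hf
  have hst' : (X : S) * s + Y * t = 1 := by exact_mod_cast congrArg (Int.cast : ℤ → S) hst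
  have key : ((a : S) * X - Y * θ) * (θ + ((a * X * t + b * Y * t - c * Y * s : ℤ) : S)) =
      Z ^ 2 * (a * t + s * θ) := by
    push_cast
    rw [← hf']
    linear_combination (-(Y : S)) * hθ + (-(a : S) * X * θ - c * a * Y * 1 - b * Y * θ) * hst'
  have e1 : (a : S) = s * (a * X - Y * θ) + Y * (a * t + s * θ) := by
    linear_combination (-(a : S)) * hst'
  have e2 : θ = X * (a * t + s * θ) - t * (a * X - Y * θ) := by
    linear_combination (-θ) * hst'
  rw [pg_singleton_mul_pair, pg_singleton_mul_pair, key]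
  apply le_antisymm
  · rw [Ideal.span_le, Set.pair_subset_iff]
    constructor
    · exact Ideal.mem_span_pair.2 ⟨s, Y, by linear_combination (-(Z : S) ^ 2) * e1⟩
    · exact Ideal.mem_span_pair.2 ⟨-t, X, by linear_combination (-(Z : S) ^ 2) * e2⟩
  · rw [Ideal.span_le, Set.pair_subset_iff]
    constructor
    · exact Ideal.mem_span_pair.2 ⟨X, -Y, by ring⟩
    · exact Ideal.mem_span_pair.2 ⟨t, s, by ring⟩

lemma pg_sq_ideal {S : Type*} [CommRing S] (τ : S) (tr Z m u v : ℤ)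
    (hτ : τ ^ 2 = tr * τ - Z ^ 2 * m) (huv : u * tr + v * Z = 1) :
    Ideal.span {(Z : S), τ} ^ 2 = Ideal.span {(Z : S) ^ 2, τ} := by
  have huv' : (u : S) * tr + v * Z = 1 := by exact_mod_cast congrArg (Int.cast : ℤ → S) huv
  rw [sq, Ideal.span_pair_mul_span_pair]
  apply le_antisymm
  · rw [Ideal.span_le]
    rintro x (rfl | rfl | rfl | rfl)
    · exact Ideal.mem_span_pair.2 ⟨1, 0, by ring⟩
    · exact Ideal.mem_span_pair.2 ⟨0, Z, by ring⟩
    · exact Ideal.mem_span_pair.2 ⟨0, Z, by ring⟩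
    · exact Ideal.mem_span_pair.2 ⟨-m, tr, by linear_combination -hτ⟩
  · set I := Ideal.span {(Z : S) * Z, Z * τ, τ * Z, τ * τ} with hI
    have h1 : (Z : S) * Z ∈ I := Ideal.subset_span (by simp)
    have h2 : (Z : S) * τ ∈ I := Ideal.subset_span (by simp)
    have h3 : τ * τ ∈ I := Ideal.subset_span (by simp)
    rw [Ideal.span_le, Set.pair_subset_iff]
    constructor
    · rw [sq]; exact h1
    · have : τ = u * (τ * τ) + (u * m) * (Z * Z) + v * (Z * τ) := by
        linear_combination (-τ) * huv' - u * hτ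
      rw [this]
      exact add_mem (add_mem (Ideal.mul_mem_left _ _ h3) (Ideal.mul_mem_left _ _ h1))
        (Ideal.mul_mem_left _ _ h2)

lemma pg_conj_ideal {S : Type*} [CommRing S] (τ : S) (tr Z m u v : ℤ)
    (hτ : τ ^ 2 = tr * τ - Z ^ 2 * m) (huv : u * tr + v * Z = 1) :
    Ideal.span {(Z : S), τ} * Ideal.span {(Z : S), tr - τ} = Ideal.span {(Z : S)} := by
  have huv' : (u : S) * tr + v * Z = 1 := by exact_mod_cast congrArg (Int.cast : ℤ → S) huv
  rw [Ideal.span_pair_mul_span_pair]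
  apply le_antisymm
  · rw [Ideal.span_le]
    rintro x (rfl | rfl | rfl | rfl) <;> rw [SetLike.mem_coe, Ideal.mem_span_singleton]
    · exact ⟨Z, rfl⟩
    · exact ⟨_, rfl⟩
    · exact ⟨τ, mul_comm _ _⟩
    · exact ⟨Z * m, by linear_combination -hτ⟩
  · rw [Ideal.span_le, Set.singleton_subset_iff]
    set I := Ideal.span {(Z : S) * Z, Z * (tr - τ), τ * Z, τ * (tr - τ)} with hI
    have h1 : (Z : S) * Z ∈ I := Ideal.subset_span (by simp)
    have h2 : (Z : S) * (tr - τ) ∈ I := Ideal.subset_span (by simp)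
    have h3 : τ * Z ∈ I := Ideal.subset_span (by simp)
    have : (Z : S) = u * (τ * Z) + u * (Z * (tr - τ)) + v * (Z * Z) := by
      linear_combination (-(Z : S)) * huv'
    rw [this]
    exact add_mem (add_mem (Ideal.mul_mem_left _ _ h3) (Ideal.mul_mem_left _ _ h2))
        (Ideal.mul_mem_left _ _ h1)

lemma pg_ring_part {S : Type*} [CommRing S] (θ : S) (a b c Δ X Y Z : ℤ)
    (hnz : ∀ n : ℤ, n ≠ 0 → (n : S) ∈ S⁰) (hnt : Nontrivial S)
    (hθ : θ ^ 2 + b * θ + a * c = 0) (hdisc : b ^ 2 - 4 * a * c = Δ)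
    (hf : a * X ^ 2 + b * X * Y + c * Y ^ 2 = Z ^ 2) (hXY : IsCoprime X Y)
    (hZ : IsCoprime Z Δ) (hZ0 : Z ≠ 0) (ha : a ≠ 0) :
    ∃ J : FractionalIdeal S⁰ (FractionRing S), IsUnit J ∧
      ∃ g : FractionRing S, g ≠ 0 ∧
        ((Ideal.span {(a : S), θ} : Ideal S) : FractionalIdeal S⁰ (FractionRing S)) =
          spanSingleton S⁰ g * J ^ 2 := by
  obtain ⟨s, t, hst⟩ := hXY
  have hst : X * s + Y * t = 1 := by linarith
  set h : ℤ := a * X * t + b * Y * t - c * Y * s with hh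
  set m : ℤ := a * t ^ 2 - b * t * s + c * s ^ 2 with hm
  have hn : h ^ 2 - b * h + a * c = Z ^ 2 * m := by
    rw [← hf, hh, hm]
    linear_combination (b * (a * X * t + b * Y * t - c * Y * s) - a * c * (X * s + Y * t + 1)) * hst
  have hcop : IsCoprime (2 * h - b) Z := by
    have hd : Δ = (2 * h - b) * (2 * h - b) + Z * (-4 * Z * m) := by
      linear_combination -hdisc - 4 * hn
    rw [hd] at hZ
    exact (IsCoprime.of_add_mul_left_right hZ).symm.of_mul_left_left
  obtain ⟨u, v, huv⟩ := hcop
  have hn' : (h : S) ^ 2 - b * h + a * c = Z ^ 2 * m := by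
    exact_mod_cast congrArg (Int.cast : ℤ → S) hn
  have hτ : (θ + h) ^ 2 = ((2 * h - b : ℤ) : S) * (θ + h) - Z ^ 2 * m := by
    push_cast
    linear_combination hθ - hn'
  have k1 := pg_ideal_eq θ a b c X Y Z s t hθ hf hst
  rw [← hh] at k1
  have k2 := pg_sq_ideal (θ + h) (2 * h - b) Z m u v hτ huv
  have k3 := pg_conj_ideal (θ + h) (2 * h - b) Z m u v hτ huv
  have hf' : (a : S) * X ^ 2 + b * X * Y + c * Y ^ 2 = Z ^ 2 := by
    exact_mod_cast congrArg (Int.cast : ℤ → S) hf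
  set α : S := a * X - Y * θ with hα
  have hα0 : α ≠ 0 := by
    intro h0
    have : ((a * Z ^ 2 : ℤ) : S) = α * (a * X + b * Y + Y * θ) := by
      push_cast
      rw [hα]; linear_combination (Y : S) ^ 2 * hθ - a * hf'
    rw [h0, zero_mul] at this
    have h2 := hnz (a * Z ^ 2) (by positivity)
    rw [this] at h2
    exact zero_notMem_nonZeroDivisors h2
  rw [← k2] at k1
  set J := Ideal.span {(Z : S), θ + h} with hJ
  set J' := Ideal.span {(Z : S), ((2 * h - b : ℤ) : S) - (θ + h)} with hJ'
  let K := FractionRing S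
  have hZK : IsUnit (algebraMap S K Z) := IsLocalization.map_units K ⟨(Z : S), hnz Z hZ0⟩
  obtain ⟨w, hw⟩ := hZK.exists_right_inv
  have k3' : (J : FractionalIdeal S⁰ K) * (J' : FractionalIdeal S⁰ K) =
      spanSingleton S⁰ (algebraMap S K Z) := by
    rw [← coeIdeal_mul, k3, coeIdeal_span_singleton]
  have k1' : spanSingleton S⁰ (algebraMap S K Z ^ 2) *
      ((Ideal.span {(a : S), θ} : Ideal S) : FractionalIdeal S⁰ K) =
      spanSingleton S⁰ (algebraMap S K α) * (J : FractionalIdeal S⁰ K) ^ 2 := by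
    rw [← map_pow, ← coeIdeal_span_singleton, ← coeIdeal_span_singleton, ← coeIdeal_mul, k1,
      coeIdeal_mul, coeIdeal_pow]
  refine ⟨(J : FractionalIdeal S⁰ K), ?_, w ^ 2 * algebraMap S K α, ?_, ?_⟩
  · refine IsUnit.of_mul_eq_one ((J' : FractionalIdeal S⁰ K) * spanSingleton S⁰ w) ?_
    rw [← mul_assoc, k3', spanSingleton_mul_spanSingleton, hw, spanSingleton_one]
  · intro h0
    apply hα0
    apply IsFractionRing.injective S K
    rw [map_zero]
    calc algebraMap S K α = (algebraMap S K Z) ^ 2 * (w ^ 2 * algebraMap S K α) := by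
          rw [← mul_assoc, ← mul_pow, hw]; ring
      _ = 0 := by rw [h0, mul_zero]
  · rw [← spanSingleton_mul_spanSingleton, mul_assoc, ← k1', ← mul_assoc,
      spanSingleton_mul_spanSingleton, ← mul_pow, mul_comm w, hw, one_pow, spanSingleton_one,
      one_mul]

lemma pg_int_nzd (π μ : ℤ) (n : ℤ) (hn : n ≠ 0) :
    (n : ℤ[X] ⧸ Ideal.span {(X : ℤ[X]) ^ 2 + C π * X - C μ}) ∈
      (ℤ[X] ⧸ Ideal.span {(X : ℤ[X]) ^ 2 + C π * X - C μ})⁰ := by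
  have hmon : ((X : ℤ[X]) ^ 2 + C π * X - C μ).Monic := by monicity!
  rw [mem_nonZeroDivisors_iff_right]
  intro x
  obtain ⟨p, rfl⟩ := Ideal.Quotient.mk_surjective x
  intro h
  have hc : (n : ℤ[X] ⧸ Ideal.span {(X : ℤ[X]) ^ 2 + C π * X - C μ}) =
      Ideal.Quotient.mk (Ideal.span {(X : ℤ[X]) ^ 2 + C π * X - C μ}) (n : ℤ[X]) := by
    rw [map_intCast]
  rw [hc, ← map_mul, Ideal.Quotient.eq_zero_iff_mem,
    Ideal.mem_span_singleton, ← modByMonic_eq_zero_iff_dvd hmon] at h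
  rw [Ideal.Quotient.eq_zero_iff_mem, Ideal.mem_span_singleton, ← modByMonic_eq_zero_iff_dvd hmon]
  have : p * (n : ℤ[X]) = n • p := by rw [zsmul_eq_mul, mul_comm]
  rw [this, smul_modByMonic] at h
  exact (smul_eq_zero.1 h).resolve_left hn

lemma pg_nontriv (π μ : ℤ) :
    Nontrivial (ℤ[X] ⧸ Ideal.span {(X : ℤ[X]) ^ 2 + C π * X - C μ}) := by
  have hd : ((X : ℤ[X]) ^ 2 + C π * X - C μ).natDegree = 2 := by compute_degree!
  have hmon : ((X : ℤ[X]) ^ 2 + C π * X - C μ).Monic := by monicity!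
  rw [Ideal.Quotient.nontrivial_iff, Ne, Ideal.span_singleton_eq_top, hmon.isUnit_iff]
  intro h
  rw [h] at hd
  simp at hd

lemma pg_final {S : Type*} [CommRing S] (mk : ℤ[X] →+* S)
    (hnz : ∀ n : ℤ, n ≠ 0 → (n : S) ∈ S⁰) (hnt : Nontrivial S)
    (Δ π μ : ℤ) (hneg : Δ < 0)
    (hπ : π = 0 ∨ π = 1) (hparity : Δ % 2 = π % 2)
    (hΔ : Δ = π ^ 2 + 4 * μ)
    (a b c e : ℤ)
    (hdisc : b ^ 2 - 4 * a * c = Δ)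
    (ha0 : a ≠ 0)
    (hgcd : IsCoprime a Δ)
    (he : π - b = 2 * e)
    (hval : ∃ x y : ℤ, ∃ σ : ℤ, (σ = 1 ∨ σ = -1) ∧
      (Δ ∣ a - σ * (x ^ 2 + π * x * y - μ * y ^ 2)))
    (hmk : mk ((X : ℤ[X]) ^ 2 + C π * X - C μ) = 0) :
    ∃ J : FractionalIdeal S⁰ (FractionRing S), IsUnit J ∧
      ∃ g : FractionRing S, g ≠ 0 ∧
        ((Ideal.span {mk (C a), mk (X + C e)} : Ideal S) : FractionalIdeal S⁰ (FractionRing S)) =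
          spanSingleton S⁰ g * J ^ 2 := by
  obtain ⟨x, y, σ, hσ, hdvd⟩ := hval
  have hb : b = π - 2 * e := by linarith
  have hΔ1 : Δ ≠ -1 := by
    rcases hπ with rfl | rfl <;> omega
  have hac : a * c = e ^ 2 - π * e - μ := by
    rw [hb] at hdisc
    have : 4 * (a * c) = 4 * (e ^ 2 - π * e - μ) := by linear_combination -hdisc - hΔ
    linarith
  have hCa : mk (C a) = (a : S) := by
    rw [eq_intCast C a, map_intCast]
  have hθ : (mk (X + C e)) ^ 2 + (b : S) * mk (X + C e) + a * c = 0 := by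
    have h1 : (mk (X + C e)) ^ 2 + (b : S) * mk (X + C e) + a * c =
        mk ((X + C e) ^ 2 + C b * (X + C e) + C (a * c)) := by
      simp [eq_intCast C]
    have h2 : (X + C e) ^ 2 + C b * (X + C e) + C (a * c) =
        (X : ℤ[X]) ^ 2 + C π * X - C μ := by
      rw [hac, hb]
      simp only [map_sub, map_mul, map_pow]
      simp only [map_ofNat]
      ring
    rw [h1, h2]
    exact hmk
  rcases lt_or_gt_of_ne ha0 with ha | ha
  · obtain ⟨X', Y', Z, hf, hZ, hco, hZ0⟩ := pg_pos Δ π μ (-a) b (-c) e x y (-σ) hneg hΔ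
      (by linear_combination hdisc) (by omega) hgcd.neg_left he hΔ1
      (by rcases hσ with rfl | rfl <;> simp)
      (by
        rw [show -a - -σ * (x ^ 2 + π * x * y - μ * y ^ 2) =
          -(a - σ * (x ^ 2 + π * x * y - μ * y ^ 2)) by ring]
        exact (dvd_neg.2 hdvd))
    have hI : Ideal.span {mk (C a), mk (X + C e)} = Ideal.span {((-a : ℤ) : S), mk (X + C e)} := by
      rw [hCa, Ideal.span_insert, Ideal.span_insert (((-a : ℤ) : S)), Int.cast_neg,
        Ideal.span_singleton_neg]
    rw [hI]
    exact pg_ring_part (mk (X + C e)) (-a) b (-c) Δ X' Y' Z hnz hnt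
      (by push_cast; linear_combination hθ) (by linear_combination hdisc) hf hco hZ hZ0 (by omega)
  · obtain ⟨X', Y', Z, hf, hZ, hco, hZ0⟩ := pg_pos Δ π μ a b c e x y σ hneg hΔ hdisc ha hgcd he hΔ1
      hσ hdvd
    have hI : Ideal.span {mk (C a), mk (X + C e)} = Ideal.span {(a : S), mk (X + C e)} := by
      rw [hCa]
    rw [hI]
    exact pg_ring_part (mk (X + C e)) a b c Δ X' Y' Z hnz hnt hθ hdisc hf hco hZ hZ0 ha0

/-- **Over `ℤ` with negative discriminant, the principal genus is the subgroup of squares.**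
Let `Δ < 0`, `π ∈ {0,1}` with `π ≡ Δ (mod 2)`, `μ = (Δ − π²)/4` (i.e. `Δ = π² + 4μ`),
and `S_ω := ℤ[ω]/⟨ω² + πω − μ⟩`. Let `a,b,c ∈ ℤ` with `b² − 4ac = Δ`, `a ≠ 0`,
`gcd(a,Δ) = 1`, `b ≡ π (mod 2)` (say `π − b = 2e`). If `a ≡ ±(x² + πxy − μy²) (mod Δ)`
for some `x,y`, then the class of the ideal `⟨a, ω + (π−b)/2⟩` in the class group of
`S_ω` is a square, i.e. `⟨a, ω + e⟩ = (g)·J²` for some invertible fractional ideal `J`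
and some nonzero `g` in the fraction field. -/
theorem principal_genus_eq_squares_int_neg_disc
    (Δ π μ : ℤ) (hneg : Δ < 0)
    (hπ : π = 0 ∨ π = 1) (hparity : Δ % 2 = π % 2)
    (hΔ : Δ = π ^ 2 + 4 * μ)
    (a b c e : ℤ)
    (hdisc : b ^ 2 - 4 * a * c = Δ)
    (ha0 : a ≠ 0)
    (hgcd : IsCoprime a Δ)
    (he : π - b = 2 * e)
    (hval : ∃ x y : ℤ, ∃ σ : ℤ, (σ = 1 ∨ σ = -1) ∧
      (Δ ∣ a - σ * (x ^ 2 + π * x * y - μ * y ^ 2))) :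
    letI Sω := ℤ[X] ⧸ Ideal.span {(X : ℤ[X]) ^ 2 + C π * X - C μ}
    letI mk : ℤ[X] →+* Sω := Ideal.Quotient.mk _
    letI I : Ideal Sω := Ideal.span {mk (C a), mk (X + C e)}
    ∃ J : FractionalIdeal Sω⁰ (FractionRing Sω), IsUnit J ∧
      ∃ g : FractionRing Sω, g ≠ 0 ∧
        (I : FractionalIdeal Sω⁰ (FractionRing Sω)) =
          spanSingleton Sω⁰ g * J ^ 2 := by
  exact pg_final (Ideal.Quotient.mk (Ideal.span {(X : ℤ[X]) ^ 2 + C π * X - C μ}))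
    (pg_int_nzd π μ) (pg_nontriv π μ) Δ π μ hneg hπ hparity hΔ a b c e hdisc ha0 hgcd he hval
    (Ideal.Quotient.eq_zero_iff_mem.2 (Ideal.mem_span_singleton_self _))
end

section
/- Let K be a field of characteristic 0 and let f ∈ K[X] be a monic squarefree polynomial of odd degree at least 3. Let a, b, c ∈ K[X] satisfy b² − ac = f with a coprime to f in K[X]. Then the ideal ⟨a, Y − b⟩ of A_f := K[X][Y]/⟨Y² − f⟩ is invertible, and its class in the class group Cl(A_f) is a square if and only if there exist ε ∈ Kˣ and p ∈ K[X] such that f divides a − ε·p² in K[X]. (This is the injectivity of the Genus Theory map over K[X]: the principal genus is precisely the subgroup of squares.) -/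
open Polynomial FractionalIdeal

open scoped nonZeroDivisors

/-- The coordinate ring `A_f := K[X][Y]/⟨Y² − f⟩` of the affine hyperelliptic
curve `Y² = f(X)`. -/
noncomputable def HypRing (K : Type*) [Field K] (f : K[X]) : Type _ :=
  Polynomial K[X] ⧸ Ideal.span {(X : Polynomial K[X]) ^ 2 - C f}

noncomputable instance (K : Type*) [Field K] (f : K[X]) : CommRing (HypRing K f) :=
  Ideal.Quotient.commRing _

/-- The quotient map `K[X][Y] → A_f`. -/
noncomputable def HypRing.mk (K : Type*) [Field K] (f : K[X]) :
    Polynomial K[X] →+* HypRing K f :=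
  Ideal.Quotient.mk _

/-- The ideal `⟨a, Y − b⟩` of `A_f`. -/
noncomputable def HypIdeal (K : Type*) [Field K] (f a b : K[X]) :
    Ideal (HypRing K f) :=
  Ideal.span {HypRing.mk K f (C a), HypRing.mk K f (X - C b)}

namespace GenusAux

section polys
variable {K : Type*} [Field K]

lemma exists_coprime_part (p q : K[X]) (h : p ≠ 0 ∨ q ≠ 0) :
    ∃ d p' q' : K[X], d ≠ 0 ∧ p = d * p' ∧ q = d * q' ∧ IsCoprime p' q' := by
  classical
  obtain ⟨p', q', hc, h1, h2⟩ : ∃ p' q', IsCoprime p' q' ∧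
      p = EuclideanDomain.gcd p q * p' ∧ q = EuclideanDomain.gcd p q * q' := by
    have hd : EuclideanDomain.gcd p q ≠ 0 := by
      intro h0
      rw [EuclideanDomain.gcd_eq_zero_iff] at h0
      tauto
    obtain ⟨p', hp⟩ := EuclideanDomain.gcd_dvd_left p q
    obtain ⟨q', hq⟩ := EuclideanDomain.gcd_dvd_right p q
    refine ⟨p', q', ?_, hp, hq⟩
    have := EuclideanDomain.gcd_eq_gcd_ab p q
    refine ⟨EuclideanDomain.gcdA p q, EuclideanDomain.gcdB p q, ?_⟩
    apply mul_left_cancel₀ hd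
    calc _ = (EuclideanDomain.gcd p q * p') * EuclideanDomain.gcdA p q +
            (EuclideanDomain.gcd p q * q') * EuclideanDomain.gcdB p q := by ring
      _ = _ := by rw [← hp, ← hq, ← this, mul_one]
  refine ⟨_, p', q', ?_, h1, h2, hc⟩
  intro h0
  rw [EuclideanDomain.gcd_eq_zero_iff] at h0
  tauto

lemma bezout3 {f A B C' : K[X]} (hs : Squarefree f) (hrel : B ^ 2 - A * C' = f) :
    ∃ r s t, r * A + s * B + t * C' = 1 := by
  obtain ⟨d, hd⟩ := (IsPrincipalIdealRing.principal (Ideal.span {A, B, C'})).principal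
  have hA : A ∈ Ideal.span {d} := by
    have : A ∈ Ideal.span {A, B, C'} := Ideal.subset_span (by simp)
    rwa [hd] at this
  have hB : B ∈ Ideal.span {d} := by
    have : B ∈ Ideal.span {A, B, C'} := Ideal.subset_span (by simp)
    rwa [hd] at this
  have hC : C' ∈ Ideal.span {d} := by
    have : C' ∈ Ideal.span {A, B, C'} := Ideal.subset_span (by simp)
    rwa [hd] at this
  rw [Ideal.mem_span_singleton] at hA hB hC
  have hu : IsUnit d := by
    apply hs
    rw [← hrel, pow_two]
    exact dvd_sub (mul_dvd_mul hB hB) (mul_dvd_mul hA hC)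
  have h1 : (1 : K[X]) ∈ Ideal.span {A, B, C'} := by
    rw [hd]
    change (1 : K[X]) ∈ Ideal.span {d}
    rw [Ideal.mem_span_singleton]
    exact hu.dvd
  obtain ⟨r, z, hz, h⟩ := Ideal.mem_span_insert.1 h1
  obtain ⟨s, t, ht⟩ := Ideal.mem_span_pair.1 hz
  exact ⟨r, s, t, by rw [h, ← ht]; ring⟩

lemma square_mod_of_norm {f a D U V : K[X]} {ε : K} (hε : ε ≠ 0) (hs : Squarefree f) (hD : D ≠ 0)
    (h : a * D ^ 2 = C ε * (U ^ 2 - f * V ^ 2)) :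
    ∃ p : K[X], f ∣ a - C ε * p ^ 2 := by
  have hεi : C ε⁻¹ * C ε = (1 : K[X]) := by rw [← C_mul, inv_mul_cancel₀ hε, C_1]
  obtain ⟨d, D, U, hd, rfl, rfl, hc⟩ := exists_coprime_part D U (Or.inl hD)
  obtain ⟨V, rfl⟩ : d ∣ V := by
    obtain ⟨e, d1, V1, he, rfl, rfl, hc1⟩ := exists_coprime_part d V (Or.inl hd)
    have h1 : d1 ^ 2 ∣ f * V1 ^ 2 := by
      refine ⟨U ^ 2 - C ε⁻¹ * a * D ^ 2, ?_⟩
      apply mul_left_cancel₀ (pow_ne_zero 2 he)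
      linear_combination (C ε⁻¹) * h + (e ^ 2 * d1 ^ 2 * U ^ 2 - e ^ 2 * f * V1 ^ 2) * hεi
    have h2 : d1 ^ 2 ∣ f := (IsCoprime.pow hc1).dvd_of_dvd_mul_right h1
    have h3 : IsUnit d1 := hs _ (by rwa [← pow_two])
    exact mul_dvd_mul_left e h3.dvd
  have h' : a * D ^ 2 = C ε * (U ^ 2 - f * V ^ 2) := by
    apply mul_left_cancel₀ (pow_ne_zero 2 hd)
    linear_combination h
  obtain ⟨r, t, hrt⟩ := (IsCoprime.pow_right hc : IsCoprime D (U ^ 2))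
  have hk : (r + t * C ε⁻¹ * a * D) * D + (t * V ^ 2) * f = 1 := by
    linear_combination hrt + t * C ε⁻¹ * h' + t * (U ^ 2 - f * V ^ 2) * hεi
  generalize (r + t * C ε⁻¹ * a * D) = r' at hk
  generalize t * V ^ 2 = k at hk
  refine ⟨U * r', a * k * (1 + r' * D) - C ε * V ^ 2 * r' ^ 2, ?_⟩
  linear_combination r' ^ 2 * h' - a * (1 + r' * D) * hk

lemma sq_degree_lt {p : K[X]} {n m : ℕ} (hp : p ∈ degreeLT K n) (h : 2 * n ≤ m + 1)
    {q : K[X]} {k : ℕ} (hq : q ≠ 0 → q.natDegree ≤ k) : (q * p ^ 2).degree < ((m + k : ℕ) : WithBot ℕ) := by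
  by_cases hp0 : p = 0
  · subst hp0; simp
  by_cases hq0 : q = 0
  · subst hq0; simp
  rw [mem_degreeLT, degree_eq_natDegree hp0] at hp
  have hp' : p.natDegree < n := by exact_mod_cast hp
  have : q * p ^ 2 ≠ 0 := mul_ne_zero hq0 (pow_ne_zero 2 hp0)
  rw [degree_eq_natDegree this, natDegree_mul hq0 (pow_ne_zero 2 hp0), natDegree_pow]
  have := hq hq0
  have : q.natDegree + 2 * p.natDegree < m + k := by omega
  exact_mod_cast this

lemma finrank_degreeLT (n : ℕ) : Module.finrank K (degreeLT K n) = n := by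
  rw [(degreeLTEquiv K n).finrank_eq]; simp

lemma fin_degreeLT (n : ℕ) : Module.Finite K (degreeLT K n) :=
  Module.Finite.equiv (degreeLTEquiv K n).symm

/-- coefficients of the remainder -/
noncomputable def remMap (g : K[X]) : K[X] →ₗ[K] (Fin g.natDegree → K) :=
  LinearMap.pi fun i => (lcoeff K i).comp (modByMonicHom g)

lemma dvd_of_remMap {g : K[X]} (hg : g.Monic) {p : K[X]} (h : remMap g p = 0) : g ∣ p := by
  rw [← modByMonic_eq_zero_iff_dvd hg]
  ext i
  by_cases hi : i < g.natDegree
  · have := congrFun h ⟨i, hi⟩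
    simpa [remMap] using this
  · rw [coeff_zero]
    apply coeff_eq_zero_of_degree_lt
    refine (degree_modByMonic_lt p hg).trans_le ?_
    rw [degree_eq_natDegree hg.ne_zero]
    exact_mod_cast not_lt.1 hi

lemma small_vec {f a b p : K[X]} (hf : f.Monic) (ha : a ≠ 0) {n1 n2 n3 : ℕ}
    (hn : f.natDegree + a.natDegree < n1 + n2 + n3) :
    ∃ u ∈ degreeLT K n1, ∃ v ∈ degreeLT K n2, ∃ s ∈ degreeLT K n3,
      (u ≠ 0 ∨ v ≠ 0 ∨ s ≠ 0) ∧ f ∣ u - p * s ∧ a ∣ u + v * b := by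
  have hal : a.leadingCoeff ≠ 0 := leadingCoeff_ne_zero.2 ha
  set a' := a * C a.leadingCoeff⁻¹ with ha'
  have hm : a'.Monic := monic_mul_leadingCoeff_inv ha
  have hdeg : a'.natDegree = a.natDegree := by
    rw [ha', natDegree_mul_C (inv_ne_zero hal)]
  have := fin_degreeLT (K := K)
  let T : (degreeLT K n1 × degreeLT K n2 × degreeLT K n3) →ₗ[K]
      ((Fin f.natDegree → K) × (Fin a'.natDegree → K)) :=
    let U := (degreeLT K n1).subtype.comp
      (LinearMap.fst K (degreeLT K n1) (degreeLT K n2 × degreeLT K n3))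
    let V := ((degreeLT K n2).subtype.comp (LinearMap.fst K (degreeLT K n2) (degreeLT K n3))).comp
      (LinearMap.snd K (degreeLT K n1) (degreeLT K n2 × degreeLT K n3))
    let S := ((degreeLT K n3).subtype.comp (LinearMap.snd K (degreeLT K n2) (degreeLT K n3))).comp
      (LinearMap.snd K (degreeLT K n1) (degreeLT K n2 × degreeLT K n3))
    LinearMap.prod ((remMap f).comp (U - (LinearMap.mulLeft K p).comp S))
      ((remMap a').comp (U + (LinearMap.mulRight K b).comp V))
  have hker : LinearMap.ker T ≠ ⊥ := by
    apply LinearMap.ker_ne_bot_of_finrank_lt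
    simp only [Module.finrank_prod, finrank_degreeLT, Module.finrank_fin_fun]
    omega
  obtain ⟨⟨u, v, s⟩, hx, hx0⟩ := (Submodule.ne_bot_iff _).1 hker
  have hT : T (u, v, s) = (remMap f (u - p * s), remMap a' (u + v * b)) := by
    simp [T]
  rw [LinearMap.mem_ker, hT, Prod.mk_eq_zero] at hx
  refine ⟨u, u.2, v, v.2, s, s.2, ?_, dvd_of_remMap hf hx.1, ?_⟩
  · by_contra! hc
    apply hx0
    ext1
    · exact Subtype.ext hc.1
    · ext1
      · exact Subtype.ext hc.2.1
      · exact Subtype.ext hc.2.2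
  · exact (Dvd.intro _ rfl : a ∣ a').trans (dvd_of_remMap hm hx.2)

lemma odd_norm_ne_zero {f : K[X]} (hodd : Odd f.natDegree) {u v : K[X]}
    (h : u ^ 2 - f * v ^ 2 = 0) : u = 0 ∧ v = 0 := by
  have hf : f ≠ 0 := by rintro rfl; simp at hodd
  have hv : v = 0 := by
    by_contra hv
    have h1 : u ^ 2 = f * v ^ 2 := sub_eq_zero.1 h
    have := congrArg natDegree h1
    rw [natDegree_pow, natDegree_mul hf (pow_ne_zero 2 hv), natDegree_pow] at this
    obtain ⟨k, hk⟩ := hodd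
    omega
  subst hv
  simpa using h

lemma represent {f a b c p : K[X]} {ε : K} (hε : ε ≠ 0) (hf : f.Monic) (hodd : Odd f.natDegree)
    (hrel : b ^ 2 - a * c = f) (hcop : IsCoprime a f) (ha : a ≠ 0)
    (hp : f ∣ a - C ε * p ^ 2) :
    ∃ w v s : K[X], IsCoprime w v ∧ C ε * (a * w ^ 2 - 2 * b * v * w + c * v ^ 2) = s ^ 2 := by
  set e := f.natDegree with he
  set d := a.natDegree with hd
  obtain ⟨u, hu, v, hv, s, hs, hne, ⟨k, hk⟩, ⟨w, hw⟩⟩ :=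
    small_vec (f := f) (a := a) (b := b) (p := p) hf ha (n1 := (e + d + 1) / 2) (n2 := (d + 1) / 2)
      (n3 := (e + 1) / 2) (by obtain ⟨j, hj⟩ := hodd; omega)
  obtain ⟨l, hl⟩ := hp
  have hQ : C ε * (u ^ 2 - f * v ^ 2) - a * s ^ 2 = 0 := by
    apply eq_zero_of_dvd_of_degree_lt (p := a * f)
    · apply hcop.mul_dvd
      · refine ⟨C ε * (w * (u - v * b) + c * v ^ 2) - s ^ 2, ?_⟩
        linear_combination C ε * (u - v * b) * hw + C ε * v ^ 2 * hrel
      · refine ⟨C ε * (k * (u + p * s) - v ^ 2) - l * s ^ 2, ?_⟩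
        linear_combination C ε * (u + p * s) * hk - s ^ 2 * hl
    · have h0 : a * f ≠ 0 := mul_ne_zero ha hf.ne_zero
      rw [degree_eq_natDegree h0, natDegree_mul ha hf.ne_zero, ← hd, ← he]
      have e1 : (C ε * u ^ 2).degree < ((d + e : ℕ) : WithBot ℕ) :=
        sq_degree_lt hu (m := d + e) (k := 0) (by omega) (by simp)
      have e2 : ((C ε * f) * v ^ 2).degree < ((d + e : ℕ) : WithBot ℕ) :=
        sq_degree_lt hv (m := d) (k := e) (by omega)
          (fun _ => by rw [natDegree_C_mul hε])
      have e3 : (a * s ^ 2).degree < ((e + d : ℕ) : WithBot ℕ) :=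
        sq_degree_lt hs (m := e) (k := d) (by omega) (fun _ => le_rfl)
      rw [add_comm e d] at e3
      have : C ε * (u ^ 2 - f * v ^ 2) - a * s ^ 2 = C ε * u ^ 2 - C ε * f * v ^ 2 - a * s ^ 2 := by
        ring
      rw [this]
      refine (degree_sub_le _ _).trans_lt (max_lt ((degree_sub_le _ _).trans_lt (max_lt e1 e2)) e3)
  have hq : C ε * (a * w ^ 2 - 2 * b * v * w + c * v ^ 2) = s ^ 2 := by
    apply mul_left_cancel₀ ha
    have hu' : u = a * w - v * b := by rw [← hw]; ring
    rw [hu'] at hQ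
    linear_combination hQ - C ε * v ^ 2 * hrel
  have hvw : w ≠ 0 ∨ v ≠ 0 := by
    by_contra! h
    obtain ⟨rfl, rfl⟩ := h
    have hs0 : s = 0 := by
      have : s ^ 2 = 0 := by rw [← hq]; ring
      exact pow_eq_zero_iff two_ne_zero |>.1 this
    have hu0 : u = 0 := by simpa using hw
    simp [hs0, hu0] at hne
  obtain ⟨g, w, v, hg, rfl, rfl, hc⟩ := exists_coprime_part w v hvw
  obtain ⟨s, rfl⟩ : g ∣ s := by
    rw [← IsIntegrallyClosed.pow_dvd_pow_iff (n := 2) two_ne_zero, ← hq]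
    exact ⟨C ε * (a * w ^ 2 - 2 * b * v * w + c * v ^ 2), by ring⟩
  refine ⟨w, v, s, hc, ?_⟩
  apply mul_left_cancel₀ (pow_ne_zero 2 hg)
  linear_combination hq

end polys

section ring
variable {K : Type*} [Field K] {f : K[X]}

/-- constants -/
noncomputable def io (f : K[X]) : K[X] →+* HypRing K f := (HypRing.mk K f).comp C

/-- the class of `Y` -/
noncomputable def yy (f : K[X]) : HypRing K f := HypRing.mk K f X

lemma yy_sq : (yy f) ^ 2 = io f f := by
  have h : HypRing.mk K f (X ^ 2 - C f) = 0 :=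
    Ideal.Quotient.eq_zero_iff_mem.2 (Ideal.subset_span rfl)
  rw [map_sub, map_pow, sub_eq_zero] at h
  exact h

lemma hypIdeal_eq (a b : K[X]) :
    HypIdeal K f a b = Ideal.span {io f a, yy f - io f b} := by
  unfold HypIdeal
  rw [map_sub]
  rfl

lemma monic_rel : ((X : Polynomial K[X]) ^ 2 - C f).Monic := monic_X_pow_sub_C f two_ne_zero

lemma natDegree_rel : ((X : Polynomial K[X]) ^ 2 - C f).natDegree = 2 := natDegree_X_pow_sub_C

lemma exists_rep (z : HypRing K f) : ∃ p q : K[X], z = io f p + io f q * yy f := by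
  obtain ⟨P, rfl⟩ : ∃ P, HypRing.mk K f P = z := Ideal.Quotient.mk_surjective z
  have h1 : HypRing.mk K f P = HypRing.mk K f (P %ₘ (X ^ 2 - C f)) := by
    apply Ideal.Quotient.eq.2
    rw [Ideal.mem_span_singleton]
    refine ⟨P /ₘ (X ^ 2 - C f), ?_⟩
    have := modByMonic_add_div P ((X : Polynomial K[X]) ^ 2 - C f)
    linear_combination -this
  have hd : (P %ₘ (X ^ 2 - C f)).natDegree ≤ 1 := by
    have := natDegree_modByMonic_lt P (monic_rel (f := f)) (by
      intro h; have := natDegree_rel (f := f); rw [h] at this; simp at this)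
    rw [natDegree_rel] at this
    omega
  obtain ⟨q, p, hpq⟩ := exists_eq_X_add_C_of_natDegree_le_one hd
  refine ⟨p, q, ?_⟩
  rw [h1, hpq, map_add, map_mul, add_comm]
  rfl

lemma rep_zero {p q : K[X]} (h : io f p + io f q * yy f = 0) : p = 0 ∧ q = 0 := by
  have h1 : HypRing.mk K f (C q * X + C p) = 0 := by
    rw [map_add, map_mul, add_comm]; exact h
  have h2 := Ideal.mem_span_singleton.1 (Ideal.Quotient.eq_zero_iff_mem.1 h1)
  have h3 : C q * X + C p = 0 := by
    by_contra h0
    have := monic_rel.not_dvd_of_natDegree_lt h0 (by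
      rw [natDegree_rel]
      exact (natDegree_linear_le).trans_lt (by norm_num)) h2
    exact this
  constructor
  · simpa using congrArg (fun r => coeff r 0) h3
  · simpa using congrArg (fun r => coeff r 1) h3

lemma rep_inj {p q p' q' : K[X]} (h : io f p + io f q * yy f = io f p' + io f q' * yy f) :
    p = p' ∧ q = q' := by
  have : io f (p - p') + io f (q - q') * yy f = 0 := by
    rw [map_sub, map_sub]; linear_combination h
  have := rep_zero this
  exact ⟨sub_eq_zero.1 this.1, sub_eq_zero.1 this.2⟩

/-- conjugation -/
noncomputable def cj (f : K[X]) : HypRing K f →+* HypRing K f :=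
  Ideal.Quotient.lift _ (eval₂RingHom (io f) (-yy f)) (by
    intro P hP
    obtain ⟨Q, rfl⟩ := Ideal.mem_span_singleton.1 hP
    rw [map_mul]
    have : (eval₂RingHom (io f) (-yy f)) (X ^ 2 - C f) = 0 := by
      simp [yy_sq]
    rw [this, zero_mul])

lemma cj_io (p : K[X]) : cj f (io f p) = io f p := by
  have : cj f (HypRing.mk K f (C p)) = eval₂RingHom (io f) (-yy f) (C p) :=
    Ideal.Quotient.lift_mk _ _ _
  exact this.trans (by simp)

lemma cj_yy : cj f (yy f) = - yy f := by
  have : cj f (HypRing.mk K f X) = eval₂RingHom (io f) (-yy f) X :=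
    Ideal.Quotient.lift_mk _ _ _
  exact this.trans (by simp)

lemma norm_rep (p q : K[X]) : (io f p + io f q * yy f) * cj f (io f p + io f q * yy f) =
    io f (p ^ 2 - f * q ^ 2) := by
  simp only [map_add, map_mul, cj_io, cj_yy, map_sub, map_pow]
  linear_combination -(io f q) ^ 2 * yy_sq (f := f)

lemma io_inj {p q : K[X]} (h : io f p = io f q) : p = q := by
  have : io f p + io f 0 * yy f = io f q + io f 0 * yy f := by rw [h]
  exact (rep_inj this).1

lemma io_dvd {p q : K[X]} (h : io f p ∣ io f q) : p ∣ q := by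
  obtain ⟨z, hz⟩ := h
  obtain ⟨x, y, rfl⟩ := exists_rep z
  have : io f q + io f 0 * yy f = io f (p * x) + io f (p * y) * yy f := by
    rw [hz, map_mul, map_mul, map_zero]; ring
  exact ⟨x, (rep_inj this).1⟩

lemma hyp_domain (hodd : Odd f.natDegree) : IsDomain (HypRing K f) := by
  have : Nontrivial (HypRing K f) := by
    refine ⟨0, 1, fun h => ?_⟩
    have : io f 0 = io f 1 := by rw [map_zero, map_one, h]
    exact zero_ne_one (io_inj this)
  have : NoZeroDivisors (HypRing K f) := by
    refine ⟨fun {z w} h => ?_⟩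
    obtain ⟨p, q, rfl⟩ := exists_rep z
    obtain ⟨p', q', rfl⟩ := exists_rep w
    have h1 : io f ((p ^ 2 - f * q ^ 2) * (p' ^ 2 - f * q' ^ 2)) = io f 0 := by
      rw [map_mul, ← norm_rep, ← norm_rep, mul_mul_mul_comm, h, zero_mul, map_zero]
    rcases mul_eq_zero.1 (io_inj h1) with h2 | h2
    · left
      obtain ⟨rfl, rfl⟩ := odd_norm_ne_zero hodd h2
      simp
    · right
      obtain ⟨rfl, rfl⟩ := odd_norm_ne_zero hodd h2
      simp
  exact NoZeroDivisors.to_isDomain _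

lemma map_cj_hyp (a b : K[X]) :
    (HypIdeal K f a b).map (cj f) = Ideal.span {io f a, - yy f - io f b} := by
  rw [hypIdeal_eq, Ideal.map_span, Set.image_pair, map_sub, cj_io, cj_yy, cj_io]

lemma hyp_mul_conj [CharZero K] {a b c : K[X]} (hs : Squarefree f) (hrel : b ^ 2 - a * c = f) :
    HypIdeal K f a b * (HypIdeal K f a b).map (cj f) = Ideal.span {io f a} := by
  rw [map_cj_hyp, hypIdeal_eq, Ideal.span_pair_mul_span_pair]
  have hy := yy_sq (f := f)
  have hrel' : io f b ^ 2 - io f a * io f c = io f f := by rw [← hrel]; simp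
  apply le_antisymm
  · rw [Ideal.span_le]
    rintro z (rfl | rfl | rfl | rfl)
    all_goals rw [SetLike.mem_coe, Ideal.mem_span_singleton]
    · exact ⟨_, rfl⟩
    · exact ⟨_, rfl⟩
    · exact ⟨yy f - io f b, mul_comm _ _⟩
    · exact ⟨io f c, by linear_combination hrel' - hy⟩
  · rw [Ideal.span_singleton_le_iff_mem]
    obtain ⟨r, s, t, h⟩ := bezout3 hs hrel
    have h' : io f r * io f a + io f s * io f b + io f t * io f c = 1 := by
      rw [← map_one (io f), ← h]; simp
    have h2 : io f (C 2⁻¹) * 2 = 1 := by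
      have : (C 2⁻¹ : K[X]) * 2 = 1 := by
        rw [← map_ofNat C 2, ← C_mul, inv_mul_cancel₀ two_ne_zero, C_1]
      rw [← map_one (io f), ← this, map_mul, map_ofNat]
    have : io f a = io f r * (io f a * io f a) +
        (- io f s * io f (C 2⁻¹)) * (io f a * (- yy f - io f b)) +
        (- io f s * io f (C 2⁻¹)) * ((yy f - io f b) * io f a) +
        io f t * ((yy f - io f b) * (- yy f - io f b)) := by
      linear_combination (-io f a) * h' - io f s * io f a * io f b * h2 + io f t * hy -
        io f t * hrel'
    have hmem : ∀ S : Ideal (HypRing K f), io f r * (io f a * io f a) +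
        (- io f s * io f (C 2⁻¹)) * (io f a * (- yy f - io f b)) +
        (- io f s * io f (C 2⁻¹)) * ((yy f - io f b) * io f a) +
        io f t * ((yy f - io f b) * (- yy f - io f b)) ∈ S → io f a ∈ S := by
      intro S hS
      rwa [← this] at hS
    apply hmem
    refine add_mem (add_mem (add_mem ?_ ?_) ?_) ?_ <;>
      refine Ideal.mul_mem_left _ _ (Ideal.subset_span ?_) <;> simp

lemma ideal_mul_conj [CharZero K] (hs : Squarefree f) (J : Ideal (HypRing K f)) :
    ∃ n : K[X], J * J.map (cj f) = Ideal.span {io f n} := by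
  have hy := yy_sq (f := f)
  let T : Ideal K[X] :=
    { carrier := {q | ∃ p, io f p + io f q * yy f ∈ J}
      zero_mem' := ⟨0, by simp⟩
      add_mem' := by
        rintro q q' ⟨p, hp⟩ ⟨p', hp'⟩
        refine ⟨p + p', ?_⟩
        convert add_mem hp hp' using 1
        rw [map_add, map_add]; ring
      smul_mem' := by
        rintro r q ⟨p, hp⟩
        refine ⟨r * p, ?_⟩
        convert J.mul_mem_left (io f r) hp using 1
        rw [smul_eq_mul, map_mul, map_mul]; ring }
  have hTmem : ∀ q, q ∈ T ↔ ∃ p, io f p + io f q * yy f ∈ J := fun q => Iff.rfl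
  obtain ⟨t, ht⟩ := (IsPrincipalIdealRing.principal T).principal
  change T = Ideal.span {t} at ht
  obtain ⟨m, hm⟩ := (IsPrincipalIdealRing.principal (J.comap (io f))).principal
  change J.comap (io f) = Ideal.span {m} at hm
  have hTd : ∀ q, q ∈ T → t ∣ q := fun q hq => by rwa [ht, Ideal.mem_span_singleton] at hq
  have hmd : ∀ q, io f q ∈ J → m ∣ q := fun q hq => by
    rw [← Ideal.mem_comap, hm, Ideal.mem_span_singleton] at hq
    exact hq
  have hmJ : io f m ∈ J := by
    rw [← Ideal.mem_comap, hm]; exact Ideal.subset_span rfl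
  have htT : t ∈ T := by rw [ht]; exact Ideal.subset_span rfl
  obtain ⟨x0, hx0⟩ := (hTmem t).1 htT
  obtain ⟨B, rfl⟩ : t ∣ x0 := by
    apply hTd
    refine ⟨t * f, ?_⟩
    convert J.mul_mem_left (yy f) hx0 using 1
    rw [map_mul]
    linear_combination -io f t * hy
  obtain ⟨A, rfl⟩ : t ∣ m := by
    apply hTd
    refine ⟨0, ?_⟩
    convert J.mul_mem_left (yy f) hmJ using 1
    rw [map_zero]; ring
  have hJ : J = Ideal.span {io f t} * HypIdeal K f A (-B) := by
    rw [hypIdeal_eq, Ideal.span_mul_span', Set.singleton_mul, Set.image_pair]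
    apply le_antisymm
    · intro z hz
      obtain ⟨p, q, rfl⟩ := exists_rep z
      obtain ⟨k, rfl⟩ := hTd q ⟨p, hz⟩
      have h1 : io f (p - t * B * k) ∈ J := by
        convert sub_mem hz (J.mul_mem_left (io f k) hx0) using 1
        simp only [map_mul, map_sub]; ring
      obtain ⟨l, hl⟩ := hmd _ h1
      rw [Ideal.mem_span_pair]
      refine ⟨io f l, io f k, ?_⟩
      have hl' : io f p - io f t * io f B * io f k = io f t * io f A * io f l := by
        simpa only [map_mul, map_sub] using congrArg (io f) hl
      simp only [map_mul, map_neg]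
      linear_combination -hl'
    · rw [Ideal.span_le]
      rintro z (rfl | rfl)
      · rw [← map_mul]; exact hmJ
      · rw [SetLike.mem_coe]
        convert hx0 using 1
        simp only [map_mul, map_neg]; ring
  by_cases ht0 : t = 0
  · refine ⟨0, ?_⟩
    rw [hJ, ht0]; simp
  obtain ⟨l, hl⟩ : t * A ∣ t * (B ^ 2 - f) := by
    apply hmd
    convert J.mul_mem_left (io f B - yy f) hx0 using 1
    simp only [map_mul, map_sub, map_pow]
    linear_combination io f t * hy
  have hrel : (-B) ^ 2 - A * l = f := by
    apply mul_left_cancel₀ ht0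
    linear_combination hl
  refine ⟨t ^ 2 * A, ?_⟩
  rw [hJ, Ideal.map_mul, Ideal.map_span, Set.image_singleton, cj_io, mul_mul_mul_comm,
    hyp_mul_conj hs hrel, Ideal.span_singleton_mul_span_singleton,
    Ideal.span_singleton_mul_span_singleton, map_mul, map_pow, pow_two]

/-- If `(D) I = (γ) J²` then the norm equation holds. -/
lemma forward [CharZero K] {a b c : K[X]} (hs : Squarefree f) (hodd : Odd f.natDegree)
    (hrel : b ^ 2 - a * c = f) (D γ : HypRing K f) (hD : D ≠ 0) (J : Ideal (HypRing K f))
    (h : Ideal.span {D} * HypIdeal K f a b = Ideal.span {γ} * J ^ 2) :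
    ∃ ε : K, ε ≠ 0 ∧ ∃ p : K[X], f ∣ a - C ε * p ^ 2 := by
  obtain ⟨n, hn⟩ := ideal_mul_conj hs J
  obtain ⟨x, y, hxy⟩ := exists_rep D
  obtain ⟨u, v, huv⟩ := exists_rep γ
  have hND : D * cj f D = io f (x ^ 2 - f * y ^ 2) := by rw [hxy, norm_rep]
  have hNγ : γ * cj f γ = io f (u ^ 2 - f * v ^ 2) := by rw [huv, norm_rep]
  have hN0 : x ^ 2 - f * y ^ 2 ≠ 0 := by
    intro h0
    obtain ⟨rfl, rfl⟩ := odd_norm_ne_zero hodd h0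
    exact hD (by simp [hxy])
  have h2 : (Ideal.span {D} * HypIdeal K f a b) * (Ideal.span {D} * HypIdeal K f a b).map (cj f) =
      (Ideal.span {γ} * J ^ 2) * (Ideal.span {γ} * J ^ 2).map (cj f) := by rw [h]
  rw [Ideal.map_mul, Ideal.map_mul, Ideal.map_pow, Ideal.map_span, Ideal.map_span,
    Set.image_singleton, Set.image_singleton, mul_mul_mul_comm, mul_mul_mul_comm _ (J ^ 2),
    ← mul_pow, hn, hyp_mul_conj hs hrel, Ideal.span_singleton_mul_span_singleton,
    Ideal.span_singleton_mul_span_singleton, Ideal.span_singleton_mul_span_singleton,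
    hND, hNγ, Ideal.span_singleton_pow, Ideal.span_singleton_mul_span_singleton,
    ← map_pow, ← map_mul, ← map_mul] at h2
  have hd1 := io_dvd (Ideal.span_singleton_le_span_singleton.1 h2.le)
  have hd2 := io_dvd (Ideal.span_singleton_le_span_singleton.1 h2.ge)
  obtain ⟨U, hU⟩ := associated_of_dvd_dvd hd1 hd2
  obtain ⟨ε, hε, hεU⟩ := Polynomial.isUnit_iff.1 U.isUnit
  rw [← hεU] at hU
  refine ⟨ε, hε.ne_zero, ?_⟩
  apply square_mod_of_norm hε.ne_zero hs hN0 (U := n * (u * x + f * v * y))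
    (V := n * (u * y + v * x))
  linear_combination -(x ^ 2 - f * y ^ 2) * hU

end ring

section backward
variable {K : Type*} [Field K] [CharZero K] {f : K[X]}

lemma hyp_sq {A B C' s : K[X]} {ε : K} (hε : ε ≠ 0) (hs : Squarefree f)
    (hrel : B ^ 2 - A * C' = f) (hA : C ε * A = s ^ 2) :
    HypIdeal K f A B = HypIdeal K f s B ^ 2 := by
  have hεi : C ε⁻¹ * C ε = (1 : K[X]) := by rw [← C_mul, inv_mul_cancel₀ hε, C_1]
  have hA' : A = C ε⁻¹ * s ^ 2 := by linear_combination C ε⁻¹ * hA - A * hεi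
  have hrel2 : B ^ 2 - s * (C ε⁻¹ * s * C') = f := by
    rw [← hrel, hA']; ring
  obtain ⟨r, t, k, h⟩ := bezout3 hs hrel2
  have h2 : (C 2⁻¹ : K[X]) * 2 = 1 := by
    rw [← map_ofNat C 2, ← C_mul, inv_mul_cancel₀ two_ne_zero, C_1]
  have hy := yy_sq (f := f)
  have iA := congrArg (io f) hA
  have iA' := congrArg (io f) hA'
  have ih := congrArg (io f) h
  have ih2 := congrArg (io f) h2
  have irel := congrArg (io f) hrel
  simp only [map_mul, map_add, map_sub, map_pow, map_one, map_ofNat] at iA iA' ih ih2 irel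
  rw [pow_two, hypIdeal_eq, hypIdeal_eq, Ideal.span_pair_mul_span_pair]
  apply le_antisymm
  · rw [Ideal.span_le]
    have m1 : io f s * io f s ∈ Ideal.span {io f s * io f s, io f s * (yy f - io f B),
        (yy f - io f B) * io f s, (yy f - io f B) * (yy f - io f B)} :=
      Ideal.subset_span (by simp)
    have m2 : io f s * (yy f - io f B) ∈ Ideal.span {io f s * io f s, io f s * (yy f - io f B),
        (yy f - io f B) * io f s, (yy f - io f B) * (yy f - io f B)} :=
      Ideal.subset_span (by simp)
    have m3 : (yy f - io f B) * (yy f - io f B) ∈ Ideal.span {io f s * io f s,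
        io f s * (yy f - io f B),
        (yy f - io f B) * io f s, (yy f - io f B) * (yy f - io f B)} :=
      Ideal.subset_span (by simp)
    generalize Ideal.span {io f s * io f s, io f s * (yy f - io f B),
        (yy f - io f B) * io f s, (yy f - io f B) * (yy f - io f B)} = S at m1 m2 m3
    rintro z (rfl | rfl)
    · rw [SetLike.mem_coe, iA', pow_two]
      exact S.mul_mem_left _ m1
    · rw [SetLike.mem_coe]
      have e : yy f - io f B =
          (io f r + io f k * io f (C ε⁻¹) * io f C') * (io f s * (yy f - io f B)) +
          (- io f t * io f (C 2⁻¹)) * ((yy f - io f B) * (yy f - io f B)) +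
          (- io f t * io f (C 2⁻¹) * io f (C ε⁻¹) * io f C') * (io f s * io f s) := by
        linear_combination (-(yy f - io f B)) * ih +
          (io f t * io f B * (io f B - yy f)) * ih2 + io f t * io f (C 2⁻¹) * hy
            - io f t * io f (C 2⁻¹) * irel - io f t * io f (C 2⁻¹) * io f C' * iA'
      have hmem : ∀ w, yy f - io f B = w → w ∈ S → yy f - io f B ∈ S := by
        intro w h1 h2; rwa [h1]
      refine hmem _ e (add_mem (add_mem ?_ ?_) ?_)
      · exact S.mul_mem_left _ m2
      · exact S.mul_mem_left _ m3
      · exact S.mul_mem_left _ m1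
  · rw [Ideal.span_le]
    rintro z (rfl | rfl | rfl | rfl)
    all_goals rw [SetLike.mem_coe, Ideal.mem_span_pair]
    · exact ⟨io f (C ε), 0, by linear_combination iA⟩
    · exact ⟨0, io f s, by ring⟩
    · exact ⟨0, io f s, by ring⟩
    · exact ⟨- io f C', -2 * io f B, by linear_combination irel - hy⟩

lemma backward {a b c p : K[X]} {ε : K} (hε : ε ≠ 0) (hf : f.Monic) (hs : Squarefree f)
    (hodd : Odd f.natDegree)
    (hrel : b ^ 2 - a * c = f) (hcop : IsCoprime a f) (ha : a ≠ 0)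
    (hp : f ∣ a - C ε * p ^ 2) :
    ∃ D γ : HypRing K f, D ≠ 0 ∧ γ ≠ 0 ∧ ∃ J : Ideal (HypRing K f),
      Ideal.span {D} * HypIdeal K f a b = Ideal.span {γ} * J ^ 2 := by
  obtain ⟨w, v, s, ⟨z, x, hzx⟩, hq⟩ := represent hε hf hodd hrel hcop ha hp
  -- `z * w + x * v = 1`
  set A := a * w ^ 2 - 2 * b * v * w + c * v ^ 2 with hA
  set B := -(- a * w * x - b * (w * z - v * x) + c * v * z) with hB
  set C' := a * x ^ 2 + 2 * b * x * z + c * z ^ 2 with hC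
  have hrel' : B ^ 2 - A * C' = f := by
    rw [← hrel, hA, hB, hC]
    linear_combination ((b ^ 2 - a * c) * (z * w + x * v + 1)) * hzx
  have hy := yy_sq (f := f)
  have irel := congrArg (io f) hrel
  have izx := congrArg (io f) hzx
  have iA := congrArg (io f) hA
  have iB := congrArg (io f) hB
  simp only [map_mul, map_add, map_sub, map_pow, map_one, map_ofNat, map_neg] at irel izx iA iB
  refine ⟨io f a * io f w - io f v * (yy f + io f b), io f a, ?_, ?_, HypIdeal K f s B, ?_⟩
  · intro h0
    have : io f (a * w - v * b) + io f (-v) * yy f = 0 := by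
      simp only [map_mul, map_sub, map_neg]
      linear_combination h0
    obtain ⟨h1, h2⟩ := rep_zero this
    have hv : v = 0 := neg_eq_zero.1 h2
    subst hv
    have hw : w = 0 := by simpa [ha] using h1
    subst hw
    simp at hzx
  · intro h0
    exact ha (io_inj (f := f) (by rw [h0, map_zero]))
  · rw [← hyp_sq hε hs hrel' hq]
    have hI : HypIdeal K f a b = Ideal.span {io f a * io f w + io f v * (yy f - io f b),
        - io f a * io f x + io f z * (yy f - io f b)} := by
      rw [hypIdeal_eq]
      apply le_antisymm
      · rw [Ideal.span_le]
        rintro _ (rfl | rfl)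
        all_goals rw [SetLike.mem_coe, Ideal.mem_span_pair]
        · exact ⟨io f z, - io f v, by linear_combination io f a * izx⟩
        · exact ⟨io f x, io f w, by linear_combination (yy f - io f b) * izx⟩
      · rw [Ideal.span_le]
        rintro _ (rfl | rfl)
        all_goals rw [SetLike.mem_coe, Ideal.mem_span_pair]
        · exact ⟨io f w, io f v, by ring⟩
        · exact ⟨- io f x, io f z, by ring⟩
    rw [hI, hypIdeal_eq, Ideal.span_mul_span', Ideal.span_mul_span', Set.singleton_mul,
      Set.singleton_mul, Set.image_pair, Set.image_pair]
    have e1 : (io f a * io f w - io f v * (yy f + io f b)) *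
        (io f a * io f w + io f v * (yy f - io f b)) = io f a * io f A := by
      rw [iA]
      linear_combination -io f v ^ 2 * hy + io f v ^ 2 * irel
    have e2 : (io f a * io f w - io f v * (yy f + io f b)) *
        (- io f a * io f x + io f z * (yy f - io f b)) = io f a * (yy f - io f B) := by
      rw [iB]
      linear_combination (-io f v * io f z) * hy + io f v * io f z * irel + io f a * yy f * izx
    rw [e1, e2]

end backward

end GenusAux

/-- **Injectivity of the Genus Theory map over `K[X]`: the principal genus is the
subgroup of squares.** Let `K` be a field of characteristic `0`, `f ∈ K[X]` monic,
squarefree, of odd degree `≥ 3`, and `A_f := K[X][Y]/⟨Y² − f⟩`. If `b² − ac = f`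
with `a` coprime to `f`, then the ideal `⟨a, Y − b⟩` of `A_f` is invertible, and
its class in `Cl(A_f)` is a square (i.e. `⟨a, Y − b⟩ = (g)·J²` with `J` an
invertible fractional ideal and `g ≠ 0` in the fraction field) if and only if
`f ∣ a − ε·p²` for some `ε ∈ Kˣ` and `p ∈ K[X]`. -/
theorem genus_map_injective_over_KX
    (K : Type*) [Field K] [CharZero K]
    (f : K[X]) (hmonic : f.Monic) (hsqfree : Squarefree f)
    (hodd : Odd f.natDegree) (hdeg : 3 ≤ f.natDegree)
    (a b c : K[X]) (hrel : b ^ 2 - a * c = f) (hcop : IsCoprime a f) :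
    IsUnit (HypIdeal K f a b :
        FractionalIdeal (HypRing K f)⁰ (FractionRing (HypRing K f))) ∧
    ((∃ J : FractionalIdeal (HypRing K f)⁰ (FractionRing (HypRing K f)),
        IsUnit J ∧
        ∃ g : FractionRing (HypRing K f), g ≠ 0 ∧
          (HypIdeal K f a b :
              FractionalIdeal (HypRing K f)⁰ (FractionRing (HypRing K f))) =
            spanSingleton (HypRing K f)⁰ g * J ^ 2)
      ↔ ∃ ε : K, ε ≠ 0 ∧ ∃ p : K[X], f ∣ a - C ε * p ^ 2) := by
  have hdom : IsDomain (HypRing K f) := GenusAux.hyp_domain hodd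
  have ha : a ≠ 0 := by
    rintro rfl
    have hu : IsUnit f := isCoprime_zero_left.1 hcop
    have := natDegree_eq_zero_of_isUnit hu
    omega
  have haK : algebraMap (HypRing K f) (FractionRing (HypRing K f)) (GenusAux.io f a) ≠ 0 := by
    rw [Ne, IsFractionRing.to_map_eq_zero_iff]
    intro h0
    exact ha (GenusAux.io_inj (f := f) (by rw [h0, map_zero]))
  have hunit : IsUnit (HypIdeal K f a b :
      FractionalIdeal (HypRing K f)⁰ (FractionRing (HypRing K f))) := by
    have h := congrArg (fun I : Ideal (HypRing K f) =>
      (I : FractionalIdeal (HypRing K f)⁰ (FractionRing (HypRing K f))))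
      (GenusAux.hyp_mul_conj hsqfree hrel)
    simp only [coeIdeal_mul, coeIdeal_span_singleton] at h
    refine IsUnit.of_mul_eq_one (((HypIdeal K f a b).map (GenusAux.cj f) :
      FractionalIdeal (HypRing K f)⁰ (FractionRing (HypRing K f))) *
        spanSingleton (HypRing K f)⁰
          (algebraMap (HypRing K f) (FractionRing (HypRing K f)) (GenusAux.io f a))⁻¹) ?_
    rw [← mul_assoc, h, spanSingleton_mul_spanSingleton, mul_inv_cancel₀ haK, spanSingleton_one]
  refine ⟨hunit, ?_, ?_⟩
  · rintro ⟨J, -, g, -, h⟩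
    obtain ⟨d, J0, hd, rfl⟩ := exists_eq_spanSingleton_mul J
    obtain ⟨γ, δ, hδ, rfl⟩ := IsFractionRing.div_surjective (A := HypRing K f) g
    have hδ0 : δ ≠ 0 := nonZeroDivisors.ne_zero hδ
    have hdK : algebraMap (HypRing K f) (FractionRing (HypRing K f)) d ≠ 0 := by
      rwa [Ne, IsFractionRing.to_map_eq_zero_iff]
    have hδK : algebraMap (HypRing K f) (FractionRing (HypRing K f)) δ ≠ 0 := by
      rwa [Ne, IsFractionRing.to_map_eq_zero_iff]
    apply GenusAux.forward hsqfree hodd hrel (δ * d ^ 2) γ (mul_ne_zero hδ0 (pow_ne_zero 2 hd)) J0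
    apply coeIdeal_injective (K := FractionRing (HypRing K f))
    simp only [coeIdeal_mul, coeIdeal_span_singleton, coeIdeal_pow]
    rw [h, mul_pow, spanSingleton_pow, ← mul_assoc, ← mul_assoc, spanSingleton_mul_spanSingleton,
      spanSingleton_mul_spanSingleton]
    congr 2
    rw [map_mul, map_pow]
    field_simp
  · rintro ⟨ε, hε, p, hp⟩
    obtain ⟨D, γ, hD, hγ, J, h⟩ :=
      GenusAux.backward hε hmonic hsqfree hodd hrel hcop ha hp
    have hDK : algebraMap (HypRing K f) (FractionRing (HypRing K f)) D ≠ 0 := by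
      rwa [Ne, IsFractionRing.to_map_eq_zero_iff]
    have hγK : algebraMap (HypRing K f) (FractionRing (HypRing K f)) γ ≠ 0 := by
      rwa [Ne, IsFractionRing.to_map_eq_zero_iff]
    have h' := congrArg (fun I : Ideal (HypRing K f) =>
      (I : FractionalIdeal (HypRing K f)⁰ (FractionRing (HypRing K f)))) h
    simp only [coeIdeal_mul, coeIdeal_span_singleton, coeIdeal_pow] at h'
    have hinv : ∀ x : FractionRing (HypRing K f), x ≠ 0 →
        spanSingleton (HypRing K f)⁰ x⁻¹ * spanSingleton (HypRing K f)⁰ x = 1 := by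
      intro x hx
      rw [spanSingleton_mul_spanSingleton, inv_mul_cancel₀ hx, spanSingleton_one]
    have hinv' : ∀ x : FractionRing (HypRing K f), x ≠ 0 →
        IsUnit (spanSingleton (HypRing K f)⁰ x) := by
      intro x hx
      exact IsUnit.of_mul_eq_one _ ((mul_comm _ _).trans (hinv x hx))
    refine ⟨J, ?_, _, div_ne_zero hγK hDK, ?_⟩
    · rw [← isUnit_pow_iff two_ne_zero]
      exact isUnit_of_mul_isUnit_right (h' ▸ (hinv' _ hDK).mul hunit)
    · rw [div_eq_inv_mul, ← spanSingleton_mul_spanSingleton, mul_assoc, ← h', ← mul_assoc,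
        hinv _ hDK, one_mul]
end

section
/- Let K be a field of characteristic 0, let f ∈ K[X] be monic, squarefree, of odd degree at least 3, and let a, b, c ∈ K[X] satisfy b² − ac = f with a coprime to f in K[X]. If the class of the ideal ⟨a, Y − b⟩ in Cl(A_f) is NOT a square, then for every ε ∈ Kˣ there exists a root ρ of f in a fixed algebraic closure K̄ of K such that ε·a(ρ) is not a square in the subfield K(ρ) of K̄ generated by ρ over K. -/
open Polynomial FractionalIdeal IntermediateField

open scoped nonZeroDivisors

section Helpers

/-- `⟨w, Z⟩² = ⟨w², Z⟩`. -/
theorem hyp_sq_span {R : Type*} [CommRing R] (w Z β m p q h : R)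
    (hZ : Z ^ 2 = - (2 * β * Z) - w ^ 2 * m) (hpq : p * w + q * β = 1) (h2 : h * 2 = 1) :
    (Ideal.span {w, Z}) ^ 2 = Ideal.span {w ^ 2, Z} := by
  rw [pow_two, Ideal.span_pair_mul_span_pair]
  apply le_antisymm
  · rw [Ideal.span_le]
    intro t ht
    simp only [Set.mem_insert_iff, Set.mem_singleton_iff] at ht
    simp only [SetLike.mem_coe, Ideal.mem_span_pair]
    rcases ht with rfl | rfl | rfl | rfl
    · exact ⟨1, 0, by ring⟩
    · exact ⟨0, w, by ring⟩
    · exact ⟨0, w, by ring⟩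
    · exact ⟨0, Z, by ring⟩
  · rw [Ideal.span_le]
    have h1 : w * w ∈ Ideal.span ({w * w, w * Z, Z * w, Z * Z} : Set R) :=
      Ideal.subset_span (by simp)
    have h3 : w * Z ∈ Ideal.span ({w * w, w * Z, Z * w, Z * Z} : Set R) :=
      Ideal.subset_span (by simp)
    have h4 : Z * Z ∈ Ideal.span ({w * w, w * Z, Z * w, Z * Z} : Set R) :=
      Ideal.subset_span (by simp)
    intro t ht
    simp only [Set.mem_insert_iff, Set.mem_singleton_iff] at ht
    simp only [SetLike.mem_coe]
    rcases ht with rfl | rfl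
    · rw [pow_two]; exact h1
    · have : t = p * (w * t) + (-(q * h)) * (t * t) + (-(q * h * m)) * (w * w) := by
        linear_combination (-t) * hpq + q * h * hZ - q * β * t * h2
      have h5 := add_mem (add_mem (Ideal.mul_mem_left _ p h3)
        (Ideal.mul_mem_left _ (-(q * h)) h4)) (Ideal.mul_mem_left _ (-(q * h * m)) h1)
      rwa [← this] at h5

theorem hyp_mul_conj {R : Type*} [CommRing R] (w Y β m p q h : R)
    (hY : Y ^ 2 = β ^ 2 - w ^ 2 * m) (hpq : p * w + q * β = 1) (h2 : h * 2 = 1) :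
    Ideal.span {w, Y - β} * Ideal.span {w, Y + β} = Ideal.span {w} := by
  rw [Ideal.span_pair_mul_span_pair]
  apply le_antisymm
  · rw [Ideal.span_le]
    intro t ht
    simp only [Set.mem_insert_iff, Set.mem_singleton_iff] at ht
    simp only [SetLike.mem_coe, Ideal.mem_span_singleton]
    rcases ht with rfl | rfl | rfl | rfl
    · exact ⟨w, by ring⟩
    · exact ⟨Y + β, by ring⟩
    · exact ⟨Y - β, by ring⟩
    · exact ⟨- (w * m), by linear_combination hY⟩
  · rw [Ideal.span_singleton_le_iff_mem]
    set S : Set R := {w * w, w * (Y + β), (Y - β) * w, (Y - β) * (Y + β)}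
    have h1 : w * w ∈ Ideal.span S := Ideal.subset_span (by simp [S])
    have h3 : w * (Y + β) ∈ Ideal.span S := Ideal.subset_span (by simp [S])
    have h4 : (Y - β) * w ∈ Ideal.span S := Ideal.subset_span (by simp [S])
    have : w = p * (w * w) + (q * h) * (w * (Y + β)) + (-(q * h)) * ((Y - β) * w) := by
      linear_combination (-w) * hpq - q * β * w * h2
    rw [this]
    exact add_mem (add_mem (Ideal.mul_mem_left _ _ h1) (Ideal.mul_mem_left _ _ h3))
        (Ideal.mul_mem_left _ _ h4)

theorem hyp_main_ideal {R : Type*} [CommRing R] (a b c x y r s w e e' Y β : R)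
    (hY : Y ^ 2 = b ^ 2 - a * c) (hdet : x * s - y * r = 1)
    (hrep : a * x ^ 2 + 2 * b * x * y + c * y ^ 2 = e * w ^ 2) (hee : e' * e = 1)
    (hβ : β = a * r * x + b * (r * y + s * x) + c * s * y) :
    Ideal.span {a * x + b * y + Y * y} * Ideal.span {a, Y - b} =
      Ideal.span {a} * Ideal.span {w ^ 2, Y - β} := by
  subst hβ
  rw [Ideal.span_mul_span', Ideal.span_mul_span', Set.singleton_mul, Set.singleton_mul,
    Set.image_pair, Set.image_pair]
  apply le_antisymm <;> rw [Ideal.span_le] <;> intro t ht <;>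
    simp only [Set.mem_insert_iff, Set.mem_singleton_iff] at ht <;>
    simp only [SetLike.mem_coe, Ideal.mem_span_pair]
  · rcases ht with rfl | rfl
    · refine ⟨s * e, y, ?_⟩
      linear_combination (-(s * a)) * hrep + a * (a * x + b * y) * hdet
    · refine ⟨r * e, x, ?_⟩
      linear_combination (-(r * a)) * hrep - a * (b * x + c * y) * hdet - y * hY
  · rcases ht with rfl | rfl
    · refine ⟨e' * x, -e' * y, ?_⟩
      linear_combination (-(e' * y ^ 2)) * hY + e' * a * hrep + a * w ^ 2 * hee
    · refine ⟨-r, s, ?_⟩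
      linear_combination y * s * hY + a * Y * hdet

theorem hyp_exists_sqrt {K : Type*} [Field K] (A f : K[X]) (hf : Squarefree f)
    (H : ∀ ρ : AlgebraicClosure K, aeval ρ f = 0 →
      ∃ z : AlgebraicClosure K, z ∈ K⟮ρ⟯ ∧ z ^ 2 = aeval ρ A) :
    ∃ h : K[X], f ∣ h ^ 2 - A := by
  induction f using UniqueFactorizationMonoid.induction_on_prime with
  | h₁ => exact absurd hf (by simp)
  | h₂ x hx => exact ⟨0, hx.dvd⟩
  | h₃ g p hg hp ih =>
    obtain ⟨h, hh⟩ := ih (hf.of_mul_right) (fun ρ hρ => H ρ (by simp [hρ]))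
    obtain ⟨ρ, hρ⟩ := IsAlgClosed.exists_aeval_eq_zero (AlgebraicClosure K) p
      (by
        intro h0
        exact hp.not_isUnit (isUnit_iff_degree_eq_zero.2 h0))
    obtain ⟨z, hz, hz2⟩ := H ρ (by simp [hρ])
    have hint : IsIntegral K ρ := Algebra.IsIntegral.isIntegral ρ
    rw [← IntermediateField.mem_toSubalgebra,
      IntermediateField.adjoin_simple_toSubalgebra_of_isAlgebraic hint.isAlgebraic,
      Algebra.adjoin_singleton_eq_range_aeval] at hz
    obtain ⟨q, rfl⟩ := hz
    have hpq : p ∣ q ^ 2 - A := by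
      have h1 : minpoly K ρ ∣ q ^ 2 - A := by
        apply minpoly.dvd
        simp only [map_sub, map_pow]
        rw [← hz2]; simp
      have h2 : minpoly K ρ ∣ p := minpoly.dvd _ _ hρ
      have h3 : Associated (minpoly K ρ) p :=
        (minpoly.irreducible hint).associated_of_dvd hp.irreducible h2
      exact h3.symm.dvd.trans h1
    have hcop : IsCoprime p g := by
      rw [hp.irreducible.coprime_iff_not_dvd]
      intro hd
      exact hp.not_isUnit (hf p (mul_dvd_mul_left p hd))
    obtain ⟨u, v, huv⟩ := hcop
    refine ⟨u * p * h + v * g * q, (show IsCoprime p g from ⟨u, v, huv⟩).mul_dvd ?_ ?_⟩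
    · obtain ⟨k, hk⟩ := hpq
      have hv : v * g = 1 - u * p := by linear_combination huv
      rw [hv]
      exact ⟨k + u * (h - q) * (2 * q + u * p * (h - q)), by linear_combination hk⟩
    · obtain ⟨k, hk⟩ := hh
      have hv : u * p = 1 - v * g := by linear_combination huv
      rw [hv]
      exact ⟨k + v * (q - h) * (2 * h + v * g * (q - h)), by linear_combination hk⟩

theorem hyp_deg_aux {K : Type*} [Field K] (q p : K[X]) (A N : ℕ) (hp : p ∈ degreeLT K A)
    (h : q.natDegree + 2 * A ≤ N + 1) : (q * p ^ 2).degree < N := by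
  by_cases h0 : q * p ^ 2 = 0
  · rw [h0, degree_zero]; exact WithBot.bot_lt_coe _
  have hp0 : p ≠ 0 := by rintro rfl; simp at h0
  have hq0 : q ≠ 0 := by rintro rfl; simp at h0
  rw [mem_degreeLT, ← natDegree_lt_iff_degree_lt hp0] at hp
  rw [← natDegree_lt_iff_degree_lt h0, natDegree_mul hq0 (pow_ne_zero _ hp0), natDegree_pow]
  omega

theorem hyp_solve {K : Type*} [Field K] (f a b c h : K[X]) (e : K) (he : e ≠ 0)
    (hf0 : f ≠ 0) (ha0 : a ≠ 0)
    (hodd : Odd f.natDegree) (hrel : b ^ 2 - a * c = f) (hcop : IsCoprime a f)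
    (hh : f ∣ h ^ 2 - C e * a) :
    ∃ x y w : K[X], w ≠ 0 ∧ a * x ^ 2 + 2 * b * x * y + c * y ^ 2 = C e * w ^ 2 := by
  set n := f.natDegree with hn
  set d := a.natDegree with hd
  obtain ⟨k, hk⟩ := hodd
  let A := (n + d + 1) / 2
  let B := (d + 1) / 2
  let D := (n + 1) / 2
  have hA : A = (n + d + 1) / 2 := rfl
  have hB : B = (d + 1) / 2 := rfl
  have hD : D = (n + 1) / 2 := rfl
  let π₁ : K[X] →ₗ[K] AdjoinRoot f := (AdjoinRoot.mkₐ f : K[X] →ₐ[K] AdjoinRoot f).toLinearMap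
  let π₂ : K[X] →ₗ[K] AdjoinRoot a := (AdjoinRoot.mkₐ a : K[X] →ₐ[K] AdjoinRoot a).toLinearMap
  let M := (degreeLT K A) × (degreeLT K B) × (degreeLT K D)
  let U : M →ₗ[K] K[X] := (degreeLT K A).subtype ∘ₗ LinearMap.fst K _ _
  let V : M →ₗ[K] K[X] := (degreeLT K B).subtype ∘ₗ LinearMap.fst K _ _ ∘ₗ LinearMap.snd K _ _
  let W : M →ₗ[K] K[X] := (degreeLT K D).subtype ∘ₗ LinearMap.snd K _ _ ∘ₗ LinearMap.snd K _ _
  let Φ : M →ₗ[K] AdjoinRoot f × AdjoinRoot a :=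
    (π₁ ∘ₗ (U - LinearMap.mulLeft K h ∘ₗ W)).prod (π₂ ∘ₗ (U - LinearMap.mulLeft K b ∘ₗ V))
  have : Module.Finite K (AdjoinRoot f) := (AdjoinRoot.powerBasis hf0).finite
  have : Module.Finite K (AdjoinRoot a) := (AdjoinRoot.powerBasis ha0).finite
  have (m : ℕ) : Module.Finite K (degreeLT K m) :=
    Module.Finite.equiv (degreeLTEquiv K m).symm
  have fr (m : ℕ) : Module.finrank K (degreeLT K m) = m := by
    rw [(degreeLTEquiv K m).finrank_eq]; simp
  have hker : LinearMap.ker Φ ≠ ⊥ := by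
    apply LinearMap.ker_ne_bot_of_finrank_lt
    rw [Module.finrank_prod, Module.finrank_prod, Module.finrank_prod, fr, fr, fr,
      (AdjoinRoot.powerBasis hf0).finrank, (AdjoinRoot.powerBasis ha0).finrank,
      AdjoinRoot.powerBasis_dim, AdjoinRoot.powerBasis_dim]
    omega
  obtain ⟨⟨⟨u, hu⟩, ⟨v, hv⟩, ⟨w, hw⟩⟩, hm, hne⟩ := (Submodule.ne_bot_iff _).1 hker
  have hm' : AdjoinRoot.mk f (u - h * w) = 0 ∧ AdjoinRoot.mk a (u - b * v) = 0 := by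
    rw [LinearMap.mem_ker] at hm
    exact Prod.mk_inj.1 hm
  rw [AdjoinRoot.mk_eq_zero, AdjoinRoot.mk_eq_zero] at hm'
  obtain ⟨h1, h2⟩ := hm'
  have hE : u ^ 2 - f * v ^ 2 - C e * a * w ^ 2 = 0 := by
    apply eq_zero_of_dvd_of_degree_lt (p := a * f)
    · apply hcop.mul_dvd
      · obtain ⟨l, hl⟩ := h2
        refine ⟨l * (u + b * v) + c * v ^ 2 - C e * w ^ 2, ?_⟩
        linear_combination (u + b * v) * hl + v ^ 2 * hrel
      · obtain ⟨l, hl⟩ := h1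
        obtain ⟨l', hl'⟩ := hh
        refine ⟨l * (u + h * w) - v ^ 2 + l' * w ^ 2, ?_⟩
        linear_combination (u + h * w) * hl + w ^ 2 * hl'
    · have : (a * f).degree = ((n + d : ℕ) : WithBot ℕ) := by
        rw [degree_eq_natDegree (mul_ne_zero ha0 hf0), natDegree_mul ha0 hf0, add_comm]
      rw [this]
      refine (degree_sub_le _ _).trans_lt (max_lt ((degree_sub_le _ _).trans_lt (max_lt ?_ ?_)) ?_)
      · have := hyp_deg_aux 1 u A (n + d) hu (by simp; omega)
        simpa using this
      · exact hyp_deg_aux f v B (n + d) hv (by omega)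
      · refine hyp_deg_aux _ w D (n + d) hw ?_
        rw [natDegree_C_mul he]
        omega
  have hw0 : w ≠ 0 := by
    rintro rfl
    have h3 : u ^ 2 = f * v ^ 2 := by linear_combination hE
    have hv0 : v = 0 := by
      by_contra hv0
      have := congrArg natDegree h3
      rw [natDegree_mul hf0 (pow_ne_zero _ hv0), natDegree_pow, natDegree_pow] at this
      omega
    subst hv0
    have hu0 : u = 0 := by simpa using h3
    subst hu0
    exact hne rfl
  obtain ⟨x, hx⟩ := h2
  refine ⟨x, v, w, hw0, mul_left_cancel₀ ha0 ?_⟩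
  have hu' : u = a * x + b * v := by linear_combination hx
  rw [hu'] at hE
  linear_combination hE - v ^ 2 * hrel

theorem hyp_extract_gcd {R : Type*} [CommRing R] [IsDomain R] [IsPrincipalIdealRing R] (x y : R)
    (hxy : x ≠ 0 ∨ y ≠ 0) :
    ∃ g x' y' : R, IsCoprime x' y' ∧ x = g * x' ∧ y = g * y' := by
  obtain ⟨g, hg⟩ := (IsPrincipalIdealRing.principal (Ideal.span {x, y})).principal
  have hg' : Ideal.span {x, y} = Ideal.span {g} := hg
  have hx : x ∈ Ideal.span {g} := hg' ▸ Ideal.subset_span (by simp)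
  have hy : y ∈ Ideal.span {g} := hg' ▸ Ideal.subset_span (by simp)
  have hgm : g ∈ Ideal.span {x, y} := hg' ▸ Ideal.mem_span_singleton_self g
  obtain ⟨x', rfl⟩ := Ideal.mem_span_singleton.1 hx
  obtain ⟨y', rfl⟩ := Ideal.mem_span_singleton.1 hy
  obtain ⟨u, v, huv⟩ := Ideal.mem_span_pair.1 hgm
  have hg0 : g ≠ 0 := by rintro rfl; simp at hxy
  exact ⟨g, x', y', ⟨u, v, mul_left_cancel₀ hg0 (by linear_combination huv)⟩, rfl, rfl⟩

theorem hyp_solve_coprime {K : Type*} [Field K] (a b c : K[X]) (e : K) (he : e ≠ 0)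
    (H : ∃ x y w : K[X], w ≠ 0 ∧ a * x ^ 2 + 2 * b * x * y + c * y ^ 2 = C e * w ^ 2) :
    ∃ x y w : K[X], w ≠ 0 ∧ IsCoprime x y ∧
      a * x ^ 2 + 2 * b * x * y + c * y ^ 2 = C e * w ^ 2 := by
  obtain ⟨x, y, w, hw, h⟩ := H
  have hCe : C e ≠ 0 := by simpa using he
  have hxy : x ≠ 0 ∨ y ≠ 0 := by
    by_contra! hc
    rw [hc.1, hc.2] at h
    apply mul_ne_zero hCe (pow_ne_zero 2 hw)
    rw [← h]; ring
  obtain ⟨g, x', y', hcop, hx, hy⟩ : ∃ g x' y' : K[X], IsCoprime x' y' ∧ x = g * x' ∧ y = g * y' :=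
    hyp_extract_gcd x y hxy
  subst hx hy
  have hg0 : g ≠ 0 := by rintro rfl; simp at hxy
  have hgw : g ∣ w := by
    rw [← UniqueFactorizationMonoid.pow_dvd_pow_iff_dvd two_ne_zero]
    have hu : IsUnit (C e) := isUnit_C.2 he.isUnit
    rw [← hu.dvd_mul_left, ← h]
    exact ⟨a * x' ^ 2 + 2 * b * x' * y' + c * y' ^ 2, by ring⟩
  obtain ⟨w', rfl⟩ := hgw
  refine ⟨x', y', w', right_ne_zero_of_mul hw, hcop, mul_left_cancel₀ (pow_ne_zero 2 hg0) ?_⟩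
  linear_combination h

theorem hyp_isDomain (K : Type*) [Field K] (f : K[X]) (hodd : Odd f.natDegree) :
    IsDomain (HypRing K f) := by
  have hmon : ((X : Polynomial K[X]) ^ 2 - C f).Monic := monic_X_pow_sub_C f two_ne_zero
  have hirr : Irreducible ((X : Polynomial K[X]) ^ 2 - C f) := by
    by_contra hc
    rw [hmon.not_irreducible_iff_exists_add_mul_eq_coeff natDegree_X_pow_sub_C] at hc
    obtain ⟨c₁, c₂, h0, h1⟩ := hc
    simp [coeff_X, coeff_C] at h0 h1
    have h2 : f = c₁ ^ 2 := by linear_combination (-1) * h0 + c₁ * h1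
    rw [h2, natDegree_pow] at hodd
    obtain ⟨k, hk⟩ := hodd
    omega
  have hprime : (Ideal.span {(X : Polynomial K[X]) ^ 2 - C f}).IsPrime := by
    rw [Ideal.span_singleton_prime hirr.ne_zero]
    exact hirr.prime
  exact Ideal.Quotient.isDomain _

theorem hyp_mk_C_ne_zero (K : Type*) [Field K] (f p : K[X]) (hp : p ≠ 0) :
    HypRing.mk K f (C p) ≠ 0 := by
  intro h
  have h' : (X : Polynomial K[X]) ^ 2 - C f ∣ C p := by
    rw [← Ideal.mem_span_singleton]
    exact Ideal.Quotient.eq_zero_iff_mem.1 h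
  have hmon : ((X : Polynomial K[X]) ^ 2 - C f).Monic := monic_X_pow_sub_C f two_ne_zero
  have := natDegree_le_of_dvd h' (by simpa using hp)
  rw [natDegree_X_pow_sub_C, natDegree_C] at this
  omega

theorem hyp_Y_sq (K : Type*) [Field K] (f : K[X]) :
    (HypRing.mk K f X) ^ 2 = HypRing.mk K f (C f) := by
  rw [← map_pow, ← sub_eq_zero, ← map_sub]
  exact Ideal.Quotient.eq_zero_iff_mem.2 (Ideal.mem_span_singleton_self _)

end Helpers

/-- **Non-square classes have a non-square value at some root of `f`.**
Let `K` be a field of characteristic `0`, `f ∈ K[X]` monic squarefree of odd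
degree `≥ 3`, and `b² − ac = f` with `a` coprime to `f`. If the class of
`⟨a, Y − b⟩` in `Cl(A_f)` is not a square (i.e. `⟨a, Y − b⟩` cannot be written
as `(g)·J²` with `J` invertible and `g ≠ 0`), then for every `ε ∈ Kˣ` there is
a root `ρ` of `f` in a fixed algebraic closure `K̄` such that `ε·a(ρ)` is not
a square in the subfield `K(ρ)` of `K̄`. -/
theorem nonsquare_class_has_nonsquare_value_at_root
    (K : Type*) [Field K] [CharZero K]
    (f : K[X]) (hmonic : f.Monic) (hsqfree : Squarefree f)
    (hodd : Odd f.natDegree) (hdeg : 3 ≤ f.natDegree)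
    (a b c : K[X]) (hrel : b ^ 2 - a * c = f) (hcop : IsCoprime a f)
    (hnotsq : ¬ ∃ J : FractionalIdeal (HypRing K f)⁰ (FractionRing (HypRing K f)),
        IsUnit J ∧
        ∃ g : FractionRing (HypRing K f), g ≠ 0 ∧
          (HypIdeal K f a b :
              FractionalIdeal (HypRing K f)⁰ (FractionRing (HypRing K f))) =
            spanSingleton (HypRing K f)⁰ g * J ^ 2) :
    ∀ ε : Kˣ, ∃ ρ : AlgebraicClosure K,
      aeval ρ f = 0 ∧
      ¬ ∃ z : AlgebraicClosure K, z ∈ K⟮ρ⟯ ∧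
          z ^ 2 = algebraMap K (AlgebraicClosure K) (ε : K) * aeval ρ a := by
  by_contra! hcon
  obtain ⟨ε, hε⟩ := hcon
  apply hnotsq
  have hf0 : f ≠ 0 := hmonic.ne_zero
  have ha0 : a ≠ 0 := by
    rintro rfl
    have := natDegree_eq_zero_of_isUnit (isCoprime_zero_left.1 hcop)
    omega
  obtain ⟨h, hh⟩ := hyp_exists_sqrt (C (ε : K) * a) f hsqfree (fun ρ hρ => by
    obtain ⟨z, hz, hz2⟩ := hε ρ hρ
    exact ⟨z, hz, by simpa using hz2⟩)
  have he : (ε : K) ≠ 0 := ε.ne_zero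
  obtain ⟨x, y, w, hw, ⟨s, r', hsr⟩, hrep⟩ := hyp_solve_coprime a b c ε he
    (hyp_solve f a b c h ε he hf0 ha0 hodd hrel hcop hh)
  obtain ⟨r, rfl⟩ : ∃ r, r' = -r := ⟨-r', by ring⟩
  have hdet : x * s - y * r = 1 := by linear_combination hsr
  obtain ⟨β, hβ⟩ : ∃ β, β = a * r * x + b * (r * y + s * x) + c * s * y := ⟨_, rfl⟩
  obtain ⟨m, hm⟩ : ∃ m, m = C (ε : K) * (a * r ^ 2 + 2 * b * r * s + c * s ^ 2) := ⟨_, rfl⟩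
  have hfβ : f = β ^ 2 - w ^ 2 * m := by
    rw [hβ, hm]
    linear_combination (-1) * hrel - (a * r ^ 2 + 2 * b * r * s + c * s ^ 2) * hrep
      - (b ^ 2 - a * c) * (x * s - y * r + 1) * hdet
  have hcopw : IsCoprime w β := by
    apply isCoprime_of_irreducible_dvd
    · rintro ⟨h0, -⟩; exact hw h0
    · rintro p hp ⟨k, hk⟩ ⟨l, hl⟩
      apply hp.not_isUnit
      apply hsqfree p
      rw [hfβ, hk, hl]
      exact ⟨l ^ 2 - k ^ 2 * m, by ring⟩
  obtain ⟨p, q, hpq⟩ := hcopw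
  have : IsDomain (HypRing K f) := hyp_isDomain K f hodd
  have hYf := hyp_Y_sq K f
  obtain ⟨ι, hι⟩ : ∃ ι : K[X] →+* HypRing K f, ι = (HypRing.mk K f).comp C := ⟨_, rfl⟩
  have hιC (t : K[X]) : HypRing.mk K f (C t) = ι t := by rw [hι]; rfl
  have hι0 (t : K[X]) (ht : t ≠ 0) : ι t ≠ 0 := by
    rw [← hιC]; exact hyp_mk_C_ne_zero K f t ht
  unfold HypIdeal
  rw [map_sub]
  simp only [hιC] at hYf ⊢
  generalize HypRing.mk K f X = Y at hYf ⊢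
  have h2 : ι (C (2⁻¹ : K)) * 2 = 1 := by
    have : (C (2⁻¹ : K) : K[X]) * 2 = 1 := by
      rw [show (2 : K[X]) = C 2 from rfl, ← C_mul]; simp
    have := congrArg ι this
    simpa only [map_mul, map_ofNat, map_one] using this
  have hpq' := congrArg ι hpq
  have hdet' := congrArg ι hdet
  have hrep' := congrArg ι hrep
  have hβ' := congrArg ι hβ
  have hfβ' := congrArg ι hfβ
  have hrel' := congrArg ι hrel
  have hee : ι (C (ε : K)⁻¹) * ι (C (ε : K)) = 1 := by
    rw [← map_mul, ← C_mul, inv_mul_cancel₀ he, C_1, map_one]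
  simp only [map_mul, map_add, map_sub, map_pow, map_one, map_ofNat] at hpq' hdet' hrep' hβ' hfβ' hrel'
  have hYβ : Y ^ 2 = ι β ^ 2 - ι w ^ 2 * ι m := by rw [hYf, hfβ']
  have e1 := hyp_main_ideal (ι a) (ι b) (ι c) (ι x) (ι y) (ι r) (ι s) (ι w) (ι (C (ε : K))) 
    (ι (C (ε : K)⁻¹)) Y (ι β) (by rw [hYf, hrel']) hdet' hrep' hee hβ'
  have e2 := hyp_sq_span (ι w) (Y - ι β) (ι β) (ι m) (ι p) (ι q) _
    (by linear_combination hYβ) hpq' h2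
  have e3 := hyp_mul_conj (ι w) Y (ι β) (ι m) (ι p) (ι q) _ hYβ hpq' h2
  rw [← e2] at e1
  set t : HypRing K f := ι a * ι x + ι b * ι y + Y * ι y with ht
  have ht0 : t ≠ 0 := by
    intro h0
    have : t * (ι a * ι x + ι b * ι y - Y * ι y) = ι (a * (C (ε : K) * w ^ 2)) := by
      rw [map_mul, map_mul, map_pow, ← hrep', ht]
      linear_combination (-(ι y) ^ 2) * hYf + (ι y) ^ 2 * hrel'
    rw [h0, zero_mul] at this
    exact hι0 _ (mul_ne_zero ha0 (mul_ne_zero (by simpa using he) (pow_ne_zero 2 hw))) this.symm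
  let F := FractionRing (HypRing K f)
  have hinj : Function.Injective (algebraMap (HypRing K f) F) := IsFractionRing.injective _ _
  have ht0' : algebraMap (HypRing K f) F t ≠ 0 := by
    rw [Ne, map_eq_zero_iff _ hinj]; exact ht0
  have ha0' : algebraMap (HypRing K f) F (ι a) ≠ 0 := by
    rw [Ne, map_eq_zero_iff _ hinj]; exact hι0 a ha0
  have hw0' : algebraMap (HypRing K f) F (ι w) ≠ 0 := by
    rw [Ne, map_eq_zero_iff _ hinj]; exact hι0 w hw
  have e1' := congrArg (fun I : Ideal (HypRing K f) => (I : FractionalIdeal (HypRing K f)⁰ F)) e1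
  have e3' := congrArg (fun I : Ideal (HypRing K f) => (I : FractionalIdeal (HypRing K f)⁰ F)) e3
  simp only [coeIdeal_mul, coeIdeal_pow, coeIdeal_span_singleton] at e1' e3'
  refine ⟨(Ideal.span {ι w, Y - ι β} : Ideal (HypRing K f)), ?_,
    (algebraMap (HypRing K f) F t)⁻¹ * algebraMap (HypRing K f) F (ι a),
    mul_ne_zero (inv_ne_zero ht0') ha0', ?_⟩
  · apply isUnit_of_mul_isUnit_left (y := ((Ideal.span {ι w, Y + ι β} : Ideal (HypRing K f)) : FractionalIdeal (HypRing K f)⁰ F))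
    rw [e3']
    refine IsUnit.of_mul_eq_one (spanSingleton (HypRing K f)⁰ (algebraMap (HypRing K f) F (ι w))⁻¹) ?_
    rw [spanSingleton_mul_spanSingleton, mul_inv_cancel₀ hw0', spanSingleton_one]
  · rw [← spanSingleton_mul_spanSingleton, mul_assoc, ← e1', ← mul_assoc,
      spanSingleton_mul_spanSingleton, inv_mul_cancel₀ ht0', spanSingleton_one, one_mul]
end

section
/- Let K be a number field, S a finite set of nonzero prime ideals of O_K, and O := O_{K,S} the ring of S-integers. Let f ∈ O_K[X] be monic, squarefree, of odd degree at least 3, and let A, B, C ∈ O[X] satisfy B² − A·C = f, with [A, 2B, C] primitive over O[X] and A coprime to f in K[X]. If the class of the ideal ⟨A, Y − B⟩ in Cl(K[X][Y]/⟨Y² − f⟩) is not a square, then for every unit ε ∈ Oˣ there exists a root ρ of f in a fixed algebraic closure K̄ of K such that ε·A(ρ) is not the square of any element z of K(ρ) satisfying v_𝔮(z) ≥ 0 at every finite place 𝔮 of K(ρ) not lying above a prime of S (i.e. ε·A(ρ) is not a square in the ring of S_ε-integers of K(ρ)). -/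
open Polynomial FractionalIdeal IntermediateField IsDedekindDomain NumberField

open scoped nonZeroDivisors

/-- The ring of `S`-integers of a number field `K`. -/
noncomputable abbrev SInt (K : Type*) [Field K] [NumberField K]
    (S : Finset (HeightOneSpectrum (𝓞 K))) : Type _ :=
  ((S : Set (HeightOneSpectrum (𝓞 K))).integer K)

noncomputable instance (K : Type*) [Field K] [NumberField K]
    (S : Finset (HeightOneSpectrum (𝓞 K))) :
    Algebra (SInt K S) (AlgebraicClosure K) :=
  ((algebraMap K (AlgebraicClosure K)).comp (algebraMap (SInt K S) K)).toAlgebra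

theorem hyp_alg {R : Type*} [CommRing R] (A B C F Y x y z ε e h : R) (hY : Y ^ 2 = F)
    (hrel : B ^ 2 - A * C = F) (he : e * ε = 1) (hh : h * 2 = 1)
    (p1 p2 p3 : R) (hprim : p1 * A + p2 * B + p3 * C = 1)
    (hq : A * x ^ 2 + 2 * B * x * y + C * y ^ 2 = ε * z ^ 2)
    (p q : R) (hxy : p * x + q * y = 1)
    (r s t : R) (hr : r * (A * x + B * y) + s * F + t * z = 1) :
    Ideal.span {A, Y - B} * (Ideal.span {A * x + B * y - y * Y, B * x + C * y + x * Y, z}) ^ 2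
      = Ideal.span {A * x + B * y - y * Y} := by
  set w := A * x + B * y - y * Y with hw
  set w' := B * x + C * y + x * Y with hw'
  have hJ : (Ideal.span {w, w', z}) ^ 2 = Ideal.span {w, w'} := by
    have m1 : w ∈ Ideal.span {w, w', z} := Ideal.subset_span (by simp)
    have m2 : w' ∈ Ideal.span {w, w', z} := Ideal.subset_span (by simp)
    have m3 : z ∈ Ideal.span {w, w', z} := Ideal.subset_span (by simp)
    apply le_antisymm
    · have n1 : w ∈ Ideal.span {w, w'} := Ideal.subset_span (by simp)
      have n2 : w' ∈ Ideal.span {w, w'} := Ideal.subset_span (by simp)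
      rw [pow_two, Ideal.span_mul_span', Ideal.span_le]
      rintro _ ⟨i, hi, j, hj, rfl⟩
      have key : z * z ∈ Ideal.span {w, w'} := by
        have : z * z = (e * x) * w + (e * y) * w' := by
          rw [hw, hw']
          linear_combination (-z * z) * he - e * hq
        rw [this]
        exact Ideal.add_mem _ (Ideal.mul_mem_left _ _ n1) (Ideal.mul_mem_left _ _ n2)
      simp only [Set.mem_insert_iff, Set.mem_singleton_iff] at hi hj
      simp only [SetLike.mem_coe]
      rcases hi with rfl | rfl | rfl
      · exact Ideal.mul_mem_right _ _ n1
      · exact Ideal.mul_mem_right _ _ n2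
      · rcases hj with rfl | rfl | rfl
        · exact Ideal.mul_mem_left _ _ n1
        · exact Ideal.mul_mem_left _ _ n2
        · exact key
    · have k11 := Ideal.mul_mem_mul m1 m1
      have k12 := Ideal.mul_mem_mul m1 m2
      have k13 := Ideal.mul_mem_mul m1 m3
      have k22 := Ideal.mul_mem_mul m2 m2
      have k23 := Ideal.mul_mem_mul m2 m3
      have k33 := Ideal.mul_mem_mul m3 m3
      rw [← pow_two] at k11 k12 k13 k22 k23 k33
      set v := A * x + B * y + y * Y with hv
      set v' := B * x + C * y - x * Y with hv'
      have one : (r * h) * w + (s * Y * q * (-h)) * w + (s * Y * p * h) * w'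
          + (r * h) * v + (s * Y * q * h) * v + (s * Y * p * (-h)) * v' + t * z = 1 := by
        rw [hw, hw', hv, hv']
        linear_combination hr + (r * (A * x + B * y) + s * Y ^ 2 * (p * x + q * y)) * hh
          + s * Y ^ 2 * hxy + s * hY
      have e1 : w * v = (ε * A) * (z * z) := by
        rw [hw, hv]
        linear_combination A * hq - y ^ 2 * hY + y ^ 2 * hrel
      have e2 : w * v' = (ε * (B - Y)) * (z * z) := by
        rw [hw, hv']
        linear_combination (B - Y) * hq + x * y * hY - x * y * hrel
      have e3 : w' * v = (ε * (B + Y)) * (z * z) := by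
        rw [hw', hv]
        linear_combination (B + Y) * hq + x * y * hY - x * y * hrel
      have e4 : w' * v' = (ε * C) * (z * z) := by
        rw [hw', hv']
        linear_combination C * hq - x ^ 2 * hY + x ^ 2 * hrel
      rw [Ideal.span_le]
      intro i hi
      simp only [Set.mem_insert_iff, Set.mem_singleton_iff] at hi
      simp only [SetLike.mem_coe]
      rcases hi with hi | hi
      · have : i = (r * h + s * Y * q * (-h)) * (w * w) + (s * Y * p * h) * (w * w')
          + (((r * h + s * Y * q * h) * (ε * A) + (s * Y * p * (-h)) * (ε * (B - Y)))) * (z * z)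
            + t * (w * z) := by
          rw [hi]
          linear_combination (-w) * one + (r * h + s * Y * q * h) * e1 + (s * Y * p * (-h)) * e2
        rw [this]
        exact Ideal.add_mem _ (Ideal.add_mem _ (Ideal.add_mem _ (Ideal.mul_mem_left _ _ k11)
          (Ideal.mul_mem_left _ _ k12)) (Ideal.mul_mem_left _ _ k33)) (Ideal.mul_mem_left _ _ k13)
      · have : i = (r * h + s * Y * q * (-h)) * (w * w') + (s * Y * p * h) * (w' * w')
          + (((r * h + s * Y * q * h) * (ε * (B + Y)) + (s * Y * p * (-h)) * (ε * C))) * (z * z)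
            + t * (w' * z) := by
          rw [hi]
          linear_combination (-w') * one + (r * h + s * Y * q * h) * e3 + (s * Y * p * (-h)) * e4
        rw [this]
        exact Ideal.add_mem _ (Ideal.add_mem _ (Ideal.add_mem _ (Ideal.mul_mem_left _ _ k12)
          (Ideal.mul_mem_left _ _ k22)) (Ideal.mul_mem_left _ _ k33)) (Ideal.mul_mem_left _ _ k23)
  rw [hJ]
  have f1 : A * w' = w * (Y + B) := by
    rw [hw, hw']; linear_combination y * hY + y * (-hrel)
  have f2 : (Y - B) * w' = w * (-C) := by
    rw [hw, hw']; linear_combination x * hY - x * hrel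
  apply le_antisymm
  · rw [Ideal.span_mul_span', Ideal.span_le]
    rintro _ ⟨i, hi, j, hj, rfl⟩
    simp only [Set.mem_insert_iff, Set.mem_singleton_iff] at hi hj
    simp only [SetLike.mem_coe, Ideal.mem_span_singleton]
    rcases hj with rfl | rfl
    · exact Dvd.intro_left _ rfl
    · rcases hi with rfl | rfl
      · exact ⟨_, f1⟩
      · exact ⟨_, f2⟩
  · rw [Ideal.span_singleton_le_iff_mem]
    have a1 : A ∈ Ideal.span {A, Y - B} := Ideal.subset_span (by simp)
    have a2 : Y - B ∈ Ideal.span {A, Y - B} := Ideal.subset_span (by simp)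
    have n1 : w ∈ Ideal.span {w, w'} := Ideal.subset_span (by simp)
    have n2 : w' ∈ Ideal.span {w, w'} := Ideal.subset_span (by simp)
    have : w = p1 * (A * w) + (p2 * h) * (A * w') + (-(p2 * h)) * ((Y - B) * w)
        + (-p3) * ((Y - B) * w') := by
      linear_combination (-w) * hprim - p2 * h * f1 + p3 * f2 - w * p2 * B * hh
    have hmem := Ideal.add_mem _ (Ideal.add_mem _ (Ideal.add_mem _
      (Ideal.mul_mem_left _ p1 (Ideal.mul_mem_mul a1 n1))
      (Ideal.mul_mem_left _ (p2 * h) (Ideal.mul_mem_mul a1 n2)))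
      (Ideal.mul_mem_left _ (-(p2 * h)) (Ideal.mul_mem_mul a2 n1)))
      (Ideal.mul_mem_left (Ideal.span {A, Y - B} * Ideal.span {w, w'}) (-p3) (Ideal.mul_mem_mul a2 n2))
    rwa [← this] at hmem

theorem crt_sqrt {K : Type*} [Field K] (D : K[X])
    (G : K[X]) (hG : Squarefree G)
    (hD : ∀ P : K[X], Irreducible P → P ∣ G → ∃ T, P ∣ T ^ 2 - D) : ∃ T, G ∣ T ^ 2 - D := by
  induction G using UniqueFactorizationMonoid.induction_on_prime with
  | h₁ => exact absurd hG not_squarefree_zero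
  | h₂ u hu => exact ⟨0, hu.dvd⟩
  | h₃ a P ha hP ih =>
    obtain ⟨T2, h2⟩ := ih (hG.of_mul_right) (fun Q hQ h => hD Q hQ (h.mul_left _))
    obtain ⟨T1, h1⟩ := hD P hP.irreducible (dvd_mul_right _ _)
    have hc : IsCoprime P a := by
      rw [hP.irreducible.coprime_iff_not_dvd]
      rintro ⟨c, rfl⟩
      exact hP.not_isUnit (hG P ⟨c, by ring⟩)
    have hc' := hc
    obtain ⟨u, v, huv⟩ := hc'
    refine ⟨T1 * (v * a) + T2 * (u * P), hc.mul_dvd ?_ ?_⟩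
    · obtain ⟨k, hk⟩ := h1
      refine ⟨k + (T1 * (v * a) + T2 * (u * P) + T1) * u * (T2 - T1), ?_⟩
      linear_combination hk + (T1 * (v * a) + T2 * (u * P) + T1) * T1 * huv
    · obtain ⟨k, hk⟩ := h2
      refine ⟨k + (T1 * (v * a) + T2 * (u * P) + T2) * v * (T1 - T2), ?_⟩
      linear_combination hk + (T1 * (v * a) + T2 * (u * P) + T2) * T2 * huv

theorem sqrt_local {K : Type*} [Field K] (D P : K[X]) (hP : Irreducible P)
    (ρ : AlgebraicClosure K) (hρ : aeval ρ P = 0) (z : AlgebraicClosure K)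
    (hz : z ∈ K⟮ρ⟯) (h : z ^ 2 = aeval ρ D) : ∃ T, P ∣ T ^ 2 - D := by
  have hint : IsIntegral K ρ := Algebra.IsIntegral.isIntegral ρ
  have : z ∈ Algebra.adjoin K {ρ} := by
    rw [← IntermediateField.adjoin_simple_toSubalgebra_of_isAlgebraic hint.isAlgebraic]
    exact hz
  rw [Algebra.adjoin_singleton_eq_range_aeval] at this
  obtain ⟨T, rfl⟩ := this
  refine ⟨T, ?_⟩
  have h1 : minpoly K ρ ∣ T ^ 2 - D := by
    apply minpoly.dvd
    simpa [sub_eq_zero] using h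
  have h2 : minpoly K ρ ∣ P := minpoly.dvd _ _ hρ
  have h3 := (minpoly.irreducible hint).associated_of_dvd hP h2
  exact h3.symm.dvd.trans h1

theorem degLT_cases {K : Type*} [Field K] {m : ℕ} {p : K[X]} (h : p ∈ degreeLT K m) :
    p = 0 ∨ p.natDegree < m := by
  by_cases hp : p = 0
  · exact Or.inl hp
  · right
    rw [mem_degreeLT] at h
    exact (natDegree_lt_iff_degree_lt hp).2 h

theorem exists_conic {K : Type*} [Field K] (F A B C T : K[X]) (e : K) (hA : A ≠ 0) (hF : F.Monic)
    (hodd : Odd F.natDegree) (hrel : B ^ 2 - A * C = F) (hcop : IsCoprime A F) (he : e ≠ 0)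
    (hT : F ∣ T ^ 2 - Polynomial.C e * A) :
    ∃ u y z : K[X], ¬ (u = 0 ∧ y = 0 ∧ z = 0) ∧ A ∣ u - B * y ∧
      u ^ 2 - F * y ^ 2 = Polynomial.C e * A * z ^ 2 := by
  set a := A.natDegree with ha
  set n := F.natDegree with hn
  have fA : Module.finrank K (AdjoinRoot A) = a := by
    rw [(AdjoinRoot.powerBasis hA).finrank, AdjoinRoot.powerBasis_dim]
  have fF : Module.finrank K (AdjoinRoot F) = n := by
    rw [(AdjoinRoot.powerBasis hF.ne_zero).finrank, AdjoinRoot.powerBasis_dim]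
  have : Module.Finite K (AdjoinRoot A) := (AdjoinRoot.powerBasis hA).finite
  have : Module.Finite K (AdjoinRoot F) := (AdjoinRoot.powerBasis hF.ne_zero).finite
  have fd : ∀ m, Module.finrank K (degreeLT K m) = m := fun m => by
    rw [(degreeLTEquiv K m).finrank_eq]; simp
  have : ∀ m, Module.Finite K (degreeLT K m) := fun m =>
    Module.Finite.equiv (degreeLTEquiv K m).symm
  let mu := (a + n + 1) / 2
  let my := (a + 1) / 2
  let mz := (n + 1) / 2
  let L : (degreeLT K mu × degreeLT K my × degreeLT K mz) →ₗ[K] AdjoinRoot A × AdjoinRoot F :=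
    { toFun := fun v => (AdjoinRoot.mk A ((v.1 : K[X]) - B * (v.2.1 : K[X])),
        AdjoinRoot.mk F ((v.1 : K[X]) - T * (v.2.2 : K[X])))
      map_add' := by
        intro v w
        ext <;> simp <;> ring
      map_smul' := by
        intro c v
        have key : ∀ p q r : K[X], c • p - r * (c • q) = c • (p - r * q) := by
          intro p q r
          rw [mul_smul_comm, smul_sub]
        ext
        · simp only [Prod.smul_fst, Prod.smul_snd, Submodule.coe_smul, key, AdjoinRoot.smul_mk,
            RingHom.id_apply]
        · simp only [Prod.smul_fst, Prod.smul_snd, Submodule.coe_smul, key, AdjoinRoot.smul_mk,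
            RingHom.id_apply] }
  obtain ⟨m, hm⟩ := hodd
  have hker : LinearMap.ker L ≠ ⊥ := by
    apply LinearMap.ker_ne_bot_of_finrank_lt
    rw [Module.finrank_prod, Module.finrank_prod, Module.finrank_prod, fA, fF, fd, fd, fd]
    omega
  obtain ⟨⟨u, y, z⟩, hv, hv0⟩ := Submodule.exists_mem_ne_zero_of_ne_bot hker
  rw [LinearMap.mem_ker] at hv
  have h1 : A ∣ (u : K[X]) - B * y := AdjoinRoot.mk_eq_zero.1 (congrArg Prod.fst hv)
  have h2 : F ∣ (u : K[X]) - T * z := AdjoinRoot.mk_eq_zero.1 (congrArg Prod.snd hv)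
  refine ⟨u, y, z, ?_, h1, ?_⟩
  · rintro ⟨h1, h2, h3⟩
    apply hv0
    ext1
    · exact Subtype.ext h1
    · ext1
      · exact Subtype.ext h2
      · exact Subtype.ext h3
  obtain ⟨u, hu⟩ := u
  obtain ⟨y, hy⟩ := y
  obtain ⟨z, hz⟩ := z
  simp only at h1 h2 ⊢
  have hdvd : A * F ∣ u ^ 2 - F * y ^ 2 - Polynomial.C e * A * z ^ 2 := by
    apply hcop.mul_dvd
    · obtain ⟨k, hk⟩ := h1
      refine ⟨k * (u + B * y) + C * y ^ 2 - Polynomial.C e * z ^ 2, ?_⟩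
      linear_combination (u + B * y) * hk + y ^ 2 * hrel
    · obtain ⟨k, hk⟩ := h2
      obtain ⟨l, hl⟩ := hT
      refine ⟨k * (u + T * z) + l * z ^ 2 - y ^ 2, ?_⟩
      linear_combination (u + T * z) * hk + z ^ 2 * hl
  rw [← sub_eq_zero]
  by_contra hne
  have hle := natDegree_le_of_dvd hdvd hne
  rw [natDegree_mul hA hF.ne_zero] at hle
  have d1 : (u ^ 2).natDegree < a + n := by
    rcases degLT_cases hu with rfl | h
    · simp; omega
    · rw [natDegree_pow]; omega
  have d2 : (F * y ^ 2).natDegree < a + n := by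
    rcases degLT_cases hy with rfl | h
    · simp; omega
    · refine natDegree_mul_le.trans_lt ?_
      rw [natDegree_pow]; omega
  have d3 : (Polynomial.C e * A * z ^ 2).natDegree < a + n := by
    rcases degLT_cases hz with rfl | h
    · simp; omega
    · refine natDegree_mul_le.trans_lt ?_
      rw [natDegree_pow, natDegree_C_mul he]; omega
  have d4 := natDegree_sub_le (u ^ 2 - F * y ^ 2) (Polynomial.C e * A * z ^ 2)
  have d5 := natDegree_sub_le (u ^ 2) (F * y ^ 2)
  omega

theorem exists_form {K : Type*} [Field K] (F A B C T : K[X]) (e : K) (hA : A ≠ 0) (hF : F.Monic)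
    (hsq : Squarefree F)
    (hodd : Odd F.natDegree) (hrel : B ^ 2 - A * C = F) (hcop : IsCoprime A F) (he : e ≠ 0)
    (hT : F ∣ T ^ 2 - Polynomial.C e * A) :
    ∃ x y z : K[X], z ≠ 0 ∧ IsCoprime x y ∧
      A * x ^ 2 + 2 * B * x * y + C * y ^ 2 = Polynomial.C e * z ^ 2 ∧
      ∃ r s t : K[X], r * (A * x + B * y) + s * F + t * z = 1 := by
  obtain ⟨u, y, z, hne, ⟨x, hx⟩, hq⟩ := exists_conic F A B C T e hA hF hodd hrel hcop he hT
  have hz : z ≠ 0 := by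
    rintro rfl
    have hq' : u ^ 2 = F * y ^ 2 := by linear_combination hq
    by_cases hy : y = 0
    · subst hy
      apply hne
      simpa using hq'
    · have := congrArg natDegree hq'
      rw [natDegree_pow, natDegree_mul hF.ne_zero (pow_ne_zero _ hy), natDegree_pow] at this
      obtain ⟨m, hm⟩ := hodd
      omega
  have hu : u = A * x + B * y := by linear_combination hx
  have hform : A * x ^ 2 + 2 * B * x * y + C * y ^ 2 = Polynomial.C e * z ^ 2 := by
    apply mul_left_cancel₀ hA
    rw [hu] at hq
    linear_combination hq - y ^ 2 * hrel
  have hxy : ¬ (x = 0 ∧ y = 0) := by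
    rintro ⟨rfl, rfl⟩
    have : Polynomial.C e * z ^ 2 = 0 := by rw [← hform]; ring
    simp [he, hz] at this
  clear hq hx hu hne
  -- divide by the gcd
  obtain ⟨d, x', y', hd, hc, rfl, rfl⟩ : ∃ d x' y' : K[X], d ≠ 0 ∧ IsCoprime x' y' ∧
      x = d * x' ∧ y = d * y' := by
    classical
    have hg : EuclideanDomain.gcd x y ≠ 0 := by
      intro h
      exact hxy (EuclideanDomain.gcd_eq_zero_iff.1 h)
    obtain ⟨x', hx'⟩ := EuclideanDomain.gcd_dvd_left x y
    obtain ⟨y', hy'⟩ := EuclideanDomain.gcd_dvd_right x y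
    refine ⟨_, x', y', hg, ⟨EuclideanDomain.gcdA x y, EuclideanDomain.gcdB x y, ?_⟩, hx', hy'⟩
    apply mul_left_cancel₀ hg
    have := EuclideanDomain.gcd_eq_gcd_ab x y
    linear_combination (-EuclideanDomain.gcdA x y) * hx' - EuclideanDomain.gcdB x y * hy' - this
  have hdz : d ∣ z := by
    have hCe : (Polynomial.C e⁻¹ : K[X]) * Polynomial.C e = 1 := by
      rw [← Polynomial.C_mul, inv_mul_cancel₀ he, Polynomial.C_1]
    have : d ^ 2 ∣ z ^ 2 := ⟨Polynomial.C e⁻¹ * (A * x' ^ 2 + 2 * B * x' * y' + C * y' ^ 2), by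
      linear_combination (-z ^ 2) * hCe - Polynomial.C e⁻¹ * hform⟩
    exact (IsIntegrallyClosed.pow_dvd_pow_iff two_ne_zero).1 this
  obtain ⟨z', rfl⟩ := hdz
  have hform' : A * x' ^ 2 + 2 * B * x' * y' + C * y' ^ 2 = Polynomial.C e * z' ^ 2 := by
    apply mul_left_cancel₀ (pow_ne_zero 2 hd)
    linear_combination hform
  refine ⟨x', y', z', right_ne_zero_of_mul hz, hc, hform', ?_⟩
  have htop : Ideal.span {A * x' + B * y', F, z'} = ⊤ := by
    by_contra hnt
    obtain ⟨M, hM, hle⟩ := Ideal.exists_le_maximal _ hnt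
    obtain ⟨P, rfl⟩ := (IsPrincipalIdealRing.principal M).principal
    change Ideal.span _ ≤ Ideal.span {P} at hle
    change (Ideal.span {P}).IsMaximal at hM
    have i1 : P ∣ A * x' + B * y' := Ideal.mem_span_singleton.1 (hle (Ideal.subset_span (by simp)))
    have i2 : P ∣ F := Ideal.mem_span_singleton.1 (hle (Ideal.subset_span (by simp)))
    have i3 : P ∣ z' := Ideal.mem_span_singleton.1 (hle (Ideal.subset_span (by simp)))
    have hP0 : P ≠ 0 := by rintro rfl; exact hF.ne_zero (zero_dvd_iff.1 i2)
    have hP : Prime P := (Ideal.span_singleton_prime hP0).1 hM.isPrime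
    have hnu := hP.not_isUnit
    obtain ⟨F', hF'⟩ := i2
    have hPF' : ¬ P ∣ F' := by
      rintro ⟨c, rfl⟩
      exact hnu (hsq P ⟨c, by rw [hF']; ring⟩)
    have hPA : ¬ P ∣ A := fun h => hnu (hcop.isUnit_of_dvd' h ⟨F', hF'⟩)
    have hy : P ∣ y' := by
      obtain ⟨i, hi⟩ := i1
      obtain ⟨j, hj⟩ := i3
      have : P ∣ F' * y' ^ 2 := by
        refine ⟨i ^ 2 - Polynomial.C e * A * j ^ 2, ?_⟩
        apply mul_left_cancel₀ hP0
        subst hj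
        linear_combination (-y' ^ 2) * hF' + (A * x' + B * y' + P * i) * hi - A * hform' - y' ^ 2 * hrel
      exact hP.dvd_of_dvd_pow ((hP.dvd_or_dvd this).resolve_left hPF')
    have hx : P ∣ x' := by
      have : P ∣ A * x' := (dvd_add_left (hy.mul_left B)).1 i1
      exact (hP.dvd_or_dvd this).resolve_left hPA
    exact hnu (hc.isUnit_of_dvd' hx hy)
  have : (1 : K[X]) ∈ Ideal.span {A * x' + B * y', F, z'} := by rw [htop]; trivial
  rw [Ideal.mem_span_insert] at this
  obtain ⟨r, v, hv, h1⟩ := this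
  rw [Ideal.mem_span_pair] at hv
  obtain ⟨s, t, rfl⟩ := hv
  exact ⟨r, s, t, by rw [h1]; ring⟩

theorem hyp_nzd {K : Type*} [Field K] (F a : K[X]) (ha : a ≠ 0) :
    HypRing.mk K F (Polynomial.C a) ∈ (HypRing K F)⁰ := by
  rw [mem_nonZeroDivisors_iff_right]
  intro p hp
  obtain ⟨p, rfl⟩ := Ideal.Quotient.mk_surjective p
  have hm : (X ^ 2 - Polynomial.C F : K[X][X]).Monic := monic_X_pow_sub_C F two_ne_zero
  have h1 : HypRing.mk K F (p * Polynomial.C a) = 0 := by rw [map_mul]; exact hp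
  have h2 : (X ^ 2 - Polynomial.C F : K[X][X]) ∣ p * Polynomial.C a :=
    Ideal.mem_span_singleton.1 (Ideal.Quotient.eq_zero_iff_mem.1 h1)
  refine Ideal.Quotient.eq_zero_iff_mem.2 (Ideal.mem_span_singleton.2 ?_)
  rw [← modByMonic_eq_zero_iff_dvd hm] at h2 ⊢
  rw [mul_comm, ← smul_eq_C_mul, smul_modByMonic] at h2
  exact (smul_eq_zero.1 h2).resolve_left ha

theorem hyp_main {K : Type*} [Field K] [CharZero K] (F A B C T : K[X]) (e : K) (hA : A ≠ 0)
    (hF : F.Monic) (hsq : Squarefree F)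
    (hodd : Odd F.natDegree) (hrel : B ^ 2 - A * C = F) (hcop : IsCoprime A F) (he : e ≠ 0)
    (p1 p2 p3 : K[X]) (hprim : p1 * A + p2 * B + p3 * C = 1)
    (hT : F ∣ T ^ 2 - Polynomial.C e * A) :
    ∃ J : FractionalIdeal (HypRing K F)⁰ (FractionRing (HypRing K F)), IsUnit J ∧
      ∃ g : FractionRing (HypRing K F), g ≠ 0 ∧
      (HypIdeal K F A B : FractionalIdeal (HypRing K F)⁰ (FractionRing (HypRing K F)))
        = spanSingleton (HypRing K F)⁰ g * J ^ 2 := by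
  obtain ⟨x, y, z, hz, ⟨p, q, hxy⟩, hq, r, s, t, hr⟩ :=
    exists_form F A B C T e hA hF hsq hodd hrel hcop he hT
  let c : K[X] →+* HypRing K F := (HypRing.mk K F).comp Polynomial.C
  set Y := HypRing.mk K F X with hYd
  have hY : Y ^ 2 = c F := by
    have : HypRing.mk K F (X ^ 2 - Polynomial.C F) = 0 :=
      Ideal.Quotient.eq_zero_iff_mem.2 (Ideal.subset_span rfl)
    rw [map_sub, map_pow, sub_eq_zero] at this
    exact this
  have hCe : (Polynomial.C e⁻¹ : K[X]) * Polynomial.C e = 1 := by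
    rw [← Polynomial.C_mul, inv_mul_cancel₀ he, Polynomial.C_1]
  have hC2 : (Polynomial.C (2⁻¹ : K) : K[X]) * 2 = 1 := by
    have : (2 : K[X]) = Polynomial.C 2 := (map_ofNat Polynomial.C 2).symm
    rw [this, ← Polynomial.C_mul, inv_mul_cancel₀ two_ne_zero, Polynomial.C_1]
  have key := hyp_alg (c A) (c B) (c C) (c F) Y (c x) (c y) (c z) (c (Polynomial.C e))
    (c (Polynomial.C e⁻¹)) (c (Polynomial.C 2⁻¹)) hY
    (by simpa using congrArg c hrel) (by simpa only [map_mul, map_one] using congrArg c hCe)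
    (by simpa only [map_mul, map_one, map_ofNat] using congrArg c hC2) (c p1) (c p2) (c p3) (by simpa using congrArg c hprim)
    (by simpa only [map_add, map_mul, map_pow, map_ofNat] using congrArg c hq) (c p) (c q) (by simpa using congrArg c hxy)
    (c r) (c s) (c t) (by simpa using congrArg c hr)
  set w := c A * c x + c B * c y - c y * Y with hw
  set J := Ideal.span {w, c B * c x + c C * c y + c x * Y, c z} with hJ
  have hI : HypIdeal K F A B = Ideal.span {c A, Y - c B} := by
    simp [HypIdeal, c, hYd]
  have hwn : w ∈ (HypRing K F)⁰ := by
    have h1 : w * (c A * c x + c B * c y + c y * Y) = c (Polynomial.C e * A * z ^ 2) := by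
      have h2 := congrArg c hq
      have h3 := congrArg c hrel
      simp only [map_add, map_mul, map_sub, map_pow, map_ofNat] at h2 h3 ⊢
      rw [hw]
      linear_combination (c A) * h2 - (c y) ^ 2 * hY + (c y) ^ 2 * h3
    have h4 : c (Polynomial.C e * A * z ^ 2) ∈ (HypRing K F)⁰ :=
      hyp_nzd F _ (mul_ne_zero (mul_ne_zero (by simpa using he) hA) (pow_ne_zero _ hz))
    rw [← h1] at h4
    exact (mul_mem_nonZeroDivisors.1 h4).1
  have hnt : Nontrivial (HypRing K F) := by
    apply Ideal.Quotient.nontrivial_iff.2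
    intro h
    rw [Ideal.span_singleton_eq_top] at h
    have hm : (X ^ 2 - Polynomial.C F : K[X][X]).Monic := monic_X_pow_sub_C F two_ne_zero
    have h1 := hm.eq_one_of_isUnit h
    have h2 := natDegree_X_pow_sub_C (R := K[X]) (n := 2) (r := F)
    rw [h1] at h2
    simp at h2
  have hgu : IsUnit (algebraMap (HypRing K F) (FractionRing (HypRing K F)) w) :=
    IsLocalization.map_units _ (⟨w, hwn⟩ : (HypRing K F)⁰)
  have hfrac : (HypIdeal K F A B : FractionalIdeal (HypRing K F)⁰ (FractionRing (HypRing K F)))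
      * (J : FractionalIdeal (HypRing K F)⁰ (FractionRing (HypRing K F))) ^ 2
      = spanSingleton (HypRing K F)⁰ (algebraMap (HypRing K F) (FractionRing (HypRing K F)) w) := by
    rw [← coeIdeal_pow, ← coeIdeal_mul, hI, key, coeIdeal_span_singleton]
  obtain ⟨g, hg⟩ := hgu
  rw [← hg] at hfrac
  have hsu : IsUnit (spanSingleton (HypRing K F)⁰ (g : FractionRing (HypRing K F))) := by
    refine IsUnit.of_mul_eq_one (spanSingleton (HypRing K F)⁰
      ((g⁻¹ : (FractionRing (HypRing K F))ˣ) : FractionRing (HypRing K F))) ?_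
    rw [spanSingleton_mul_spanSingleton, Units.mul_inv, spanSingleton_one]
  have hJu : IsUnit (J : FractionalIdeal (HypRing K F)⁰ (FractionRing (HypRing K F))) := by
    rw [← hfrac] at hsu
    exact (isUnit_pow_iff two_ne_zero).1 (isUnit_of_mul_isUnit_right hsu)
  obtain ⟨j, hj⟩ := hJu
  have : Nontrivial (FractionRing (HypRing K F)) :=
    (IsLocalization.injective (FractionRing (HypRing K F)) (le_refl (HypRing K F)⁰)).nontrivial
  refine ⟨(j⁻¹ : (FractionalIdeal (HypRing K F)⁰ (FractionRing (HypRing K F)))ˣ), Units.isUnit _,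
    g, g.ne_zero, ?_⟩
  rw [← hfrac, ← hj, mul_assoc, ← mul_pow, Units.mul_inv, one_pow, mul_one]

theorem squarefree_map {K : Type*} [Field K] [NumberField K] (f : Polynomial (𝓞 K))
    (hm : f.Monic) (hsq : Squarefree f) : Squarefree (f.map (algebraMap (𝓞 K) K)) := by
  intro g hg
  have hg0 : g ≠ 0 := by
    rintro rfl
    rw [zero_mul, zero_dvd_iff] at hg
    exact (hm.map (algebraMap (𝓞 K) K)).ne_zero hg
  obtain ⟨h, hh⟩ := IsIntegrallyClosed.eq_map_mul_C_of_dvd K hm ((dvd_mul_right g g).trans hg)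
  have hl : g.leadingCoeff ≠ 0 := leadingCoeff_ne_zero.2 hg0
  have hlu : IsUnit (Polynomial.C g.leadingCoeff) := isUnit_C.2 hl.isUnit
  have hhm : h.Monic := by
    have h1 := congrArg leadingCoeff hh
    rw [leadingCoeff_mul, leadingCoeff_C] at h1
    have h2 : (h.map (algebraMap (𝓞 K) K)).leadingCoeff = 1 :=
      mul_right_cancel₀ hl (h1.trans (one_mul _).symm)
    have hinj := FaithfulSMul.algebraMap_injective (𝓞 K) K
    exact monic_of_injective hinj h2
  have hd : h * h ∣ f := by
    have hinj := FaithfulSMul.algebraMap_injective (𝓞 K) K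
    rw [← Polynomial.map_dvd_map _ hinj (hhm.mul hhm), Polynomial.map_mul]
    refine (mul_dvd_mul ?_ ?_).trans hg <;> exact ⟨_, hh.symm⟩
  have hu := hsq h hd
  rw [← hh]
  exact (hu.map (Polynomial.mapRingHom (algebraMap (𝓞 K) K))).mul hlu

/-- **Integral version: a non-square class has a value which is a non-square
`S`-integer at some root of `f`.** `K` is a number field, `O = O_{K,S}` its ring
of `S`-integers, `f ∈ O_K[X]` monic squarefree of odd degree `≥ 3`,
`[A,2B,C]` a primitive form over `O[X]` with `B² − AC = f` and `A` coprime to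
`f` in `K[X]`. If the class of `⟨A, Y − B⟩` in `Cl(K[X][Y]/⟨Y² − f⟩)` is not a
square, then for every `ε ∈ Oˣ` there is a root `ρ` of `f` in `K̄` such that
`ε·A(ρ)` is not the square of any element of `K(ρ)` which is integral over `O`
(i.e. of any `S_ε`-integer of `K(ρ)`). -/
theorem nonsquare_class_value_not_square_in_S_integers
    (K : Type*) [Field K] [NumberField K]
    (S : Finset (HeightOneSpectrum (𝓞 K)))
    (f : Polynomial (𝓞 K)) (hmonic : f.Monic)
    (hsqfree : Squarefree f)
    (hodd : Odd f.natDegree) (hdeg : 3 ≤ f.natDegree)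
    (A B C : Polynomial (SInt K S))
    (hrel : B ^ 2 - A * C = f.map (algebraMap (𝓞 K) (SInt K S)))
    (hprim : Ideal.span {A, 2 * B, C} = (⊤ : Ideal (Polynomial (SInt K S))))
    (hcop : IsCoprime (A.map (algebraMap (SInt K S) K)) (f.map (algebraMap (𝓞 K) K)))
    (hnotsq : ¬ ∃ J : FractionalIdeal (HypRing K (f.map (algebraMap (𝓞 K) K)))⁰
          (FractionRing (HypRing K (f.map (algebraMap (𝓞 K) K)))),
        IsUnit J ∧
        ∃ g : FractionRing (HypRing K (f.map (algebraMap (𝓞 K) K))), g ≠ 0 ∧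
          (HypIdeal K (f.map (algebraMap (𝓞 K) K)) (A.map (algebraMap (SInt K S) K))
              (B.map (algebraMap (SInt K S) K)) :
              FractionalIdeal (HypRing K (f.map (algebraMap (𝓞 K) K)))⁰
                (FractionRing (HypRing K (f.map (algebraMap (𝓞 K) K))))) =
            spanSingleton (HypRing K (f.map (algebraMap (𝓞 K) K)))⁰ g * J ^ 2) :
    ∀ ε : (SInt K S)ˣ, ∃ ρ : AlgebraicClosure K,
      aeval ρ (f.map (algebraMap (𝓞 K) K)) = 0 ∧
      ¬ ∃ z : AlgebraicClosure K, z ∈ K⟮ρ⟯ ∧ IsIntegral (SInt K S) z ∧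
          z ^ 2 = algebraMap K (AlgebraicClosure K) ((ε : SInt K S) : K)
              * aeval ρ (A.map (algebraMap (SInt K S) K)) := by
  intro ε
  by_contra hcon
  push Not at hcon
  apply hnotsq
  set F := f.map (algebraMap (𝓞 K) K) with hFd
  have hF : F.Monic := hmonic.map _
  have hnd : F.natDegree = f.natDegree := hmonic.natDegree_map _
  have hsq : Squarefree F := squarefree_map f hmonic hsqfree
  let φ := Polynomial.mapRingHom (algebraMap (SInt K S) K)
  have he : ((ε : SInt K S) : K) ≠ 0 := by
    have := ε.ne_zero
    exact fun h => this (Subtype.ext h)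
  have hA : A.map (algebraMap (SInt K S) K) ≠ 0 := by
    intro h
    rw [h, isCoprime_zero_left] at hcop
    have := natDegree_eq_zero_of_isUnit hcop
    omega
  obtain ⟨T, hT⟩ := crt_sqrt (Polynomial.C ((ε : SInt K S) : K) * A.map (algebraMap (SInt K S) K))
    F hsq (by
      intro P hP hPF
      obtain ⟨ρ, hρ⟩ := IsAlgClosed.exists_aeval_eq_zero (AlgebraicClosure K) P
        (degree_pos_of_irreducible hP).ne'
      obtain ⟨k, hk⟩ := hPF
      have hFρ : aeval ρ F = 0 := by rw [hk, map_mul, hρ, zero_mul]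
      obtain ⟨z, hz, -, hz2⟩ := hcon ρ hFρ
      exact sqrt_local _ P hP ρ hρ z hz (by rw [hz2, map_mul, aeval_C]))
  have h1 : (1 : Polynomial (SInt K S)) ∈ Ideal.span {A, 2 * B, C} := by rw [hprim]; trivial
  rw [Ideal.mem_span_insert] at h1
  obtain ⟨r, v, hv, h1⟩ := h1
  rw [Ideal.mem_span_pair] at hv
  obtain ⟨s, t, rfl⟩ := hv
  have hrel' : φ B ^ 2 - φ A * φ C = F := by
    rw [← map_pow, ← map_mul, ← map_sub, hrel]
    simp only [φ, coe_mapRingHom, Polynomial.map_map, hFd]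
    rfl
  refine hyp_main F _ _ (φ C) T _ hA hF hsq (hnd ▸ hodd) hrel' hcop he (φ r) (φ s * 2) (φ t) ?_ hT
  have h2 := congrArg φ h1
  simp only [map_add, map_mul, map_one, map_ofNat] at h2
  change φ r * φ A + φ s * 2 * φ B + φ t * φ C = 1
  rw [h2]; ring
end
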